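/- Let u_0(t,x) = ∫_{ℝ^d} Γ_0^{(z̄)}(t,x;T,y) φ(y) dy and define recursively, for 1 ≤ n ≤ N, u_n(t,x) = ∫_t^T ∫_{ℝ^d} Γ_0^{(z̄)}(t,x;s,ξ) Σ_{h=1}^n ((K_h - K_{h-1}) u_{n-h})(s,ξ) dξ ds (Duhamel recursion for the nested Cauchy problems). Then for every n ≤ N and (t,x) ∈ [0,T)×ℝ^d one has u_n(t,x) = L_n(t,T,x) u_0(t,x), where L_n(t,T,x) = Σ_{h=1}^n ∫_t^T ds_1 ∫_{s_1}^T ds_2 ⋯ ∫_{s_{h-1}}^T ds_h Σ_{i_1+⋯+i_h = n, i_j ≥ 1} G_{i_1}(t,s_1,x) ⋯ G_{i_h}(t,s_h,x). -/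

import Mathlib

/-!
The representation rests on conjugating differential operators by the Gaussian transition operator
`P_{s-t} f (x) = ∫ Γ₀(t,x;s,y) f(y) dy` (`Psm`).

Integration by parts against the Gaussian density shows that `P_{s-t}` turns `∂_i` into `W_i(s-t)`
and multiplication by `x_i` into `M_i(s-t)` (`Psm_pdx`, `Psm_coord`, from `gsm_deriv` and
`gsm_coord`). More generally it shifts the time argument of these operators,
`P_τ W_i(σ) = W_i(τ+σ) P_τ` and `P_τ M_i(σ) = M_i(τ+σ) P_τ` (`Psm_Wop`, `Psm_Mop`). As `G_n` is a
polynomial in these operators, `P_{s-t} G_n(s,θ) = G_n(t,θ) P_{s-t}` for every `θ` (`Tw.gop`). On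
the diagonal `G_n(s,s) = K_n - K_{n-1}` (`Kdiff_eq_Gop`), and the semigroup property gives
`P_{s-t} u_0(s,·) = u_0(t,·)` (`Psm_semigroup`, from the Chapman-Kolmogorov identity `gdens_conv`).

Suppose that each `u_{n-h}(s,·)` is a sum, over the compositions of `n - h`, of iterated integrals
of products `G_{i_1}(s,s_1) ⋯ G_{i_k}(s,s_k) u_0(s,·)`. In the Duhamel formula for `u_n(t,·)` the
operator `P_{s-t} G_h(s,s)` is then moved to the right through the whole product, which replaces
the argument `s` of all factors by `t` and yields the terms of `u_n(t,·)` belonging to compositions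
with first block `h` (`Psm_lrec`, `useq_eq_sum_lrec`, `sum_comps_succ`).

Two analytic points make this rigorous. The covariance matrix is positive definite for positive
times by the rank condition on `B` (`covMat_posDef`), so that the kernels are genuine Schwartz
densities and `u_0(s,·)` is smooth of temperate growth for `s < T` (`gsm_temperate`). Moreover all
functions of `(θ, x)` that occur are finite sums of products `c(θ) f(x)` with `c` continuous and
`f` smooth of temperate growth (`Fam`), for which exchanging `P` with integrals in `θ` is
elementary.
-/

open MeasureTheory Matrix Finset

noncomputable section

/-- Index set for `ℝ^d` split into groups of sizes `p 0, …, p r`: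
the element `⟨i, a⟩` is the `a`-th coordinate of the `i`-th group. -/
abbrev Idx (r : ℕ) (p : Fin (r + 1) → ℕ) : Type := (i : Fin (r + 1)) × Fin (p i)

variable {r : ℕ} {p : Fin (r + 1) → ℕ}

/-- The dilation exponent `σ_j = 2i+1` for a coordinate `j` in group `i`. -/
def sigmaWt (j : Idx r p) : ℕ := 2 * (j.1 : ℕ) + 1

/-- The `B`-length `|β|_B = Σ_j σ_j β_j` of a multi-index `β`. -/
def bwt (β : Idx r p → ℕ) : ℕ := ∑ j, sigmaWt j * β j

/-- The homogeneous norm `[x]_B = Σ_j |x_j|^{1/σ_j}`. -/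
def hnorm (x : Idx r p → ℝ) : ℝ := ∑ j, |x j| ^ (1 / (sigmaWt j : ℝ))

/-- Structural assumption on the matrix `B`: the group sizes are decreasing and positive,
the only nonzero blocks are the subdiagonal ones `B_1, …, B_r`, and the block `B_i`
(of size `p i × p (i-1)`) has full rank `p i`. -/
structure IsKolB (B : Matrix (Idx r p) (Idx r p) ℝ) : Prop where
  anti : Antitone p
  ppos : ∀ i, 1 ≤ p i
  sparse : ∀ j k : Idx r p, (j.1 : ℕ) ≠ (k.1 : ℕ) + 1 → B j k = 0
  rk : ∀ i k : Fin (r + 1), (i : ℕ) = (k : ℕ) + 1 →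
    (Matrix.of fun (a : Fin (p i)) (b : Fin (p k)) => B ⟨i, a⟩ ⟨k, b⟩).rank = p i

/-- Matrix exponential `e^M = Σ_n M^n / n!` (defined entrywise). -/
def mexp (M : Matrix (Idx r p) (Idx r p) ℝ) : Matrix (Idx r p) (Idx r p) ℝ :=
  Matrix.of fun i j => ∑' n : ℕ, ((n.factorial : ℝ)⁻¹ • M ^ n) i j

/-- The `d×d` matrix whose top-left `p 0 × p 0` block is `A₀` and whose other entries vanish. -/
def embed0 (A₀ : Matrix (Fin (p 0)) (Fin (p 0)) ℝ) : Matrix (Idx r p) (Idx r p) ℝ :=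
  Matrix.of fun j k =>
    if h : j.1 = 0 ∧ k.1 = 0 then
      A₀ (Fin.cast (congrArg p h.1) j.2) (Fin.cast (congrArg p h.2) k.2)
    else 0

/-- The covariance matrix `C(t) = ∫_0^t e^{sB} A e^{sBᵀ} ds`. -/
def covMat (B A : Matrix (Idx r p) (Idx r p) ℝ) (t : ℝ) :
    Matrix (Idx r p) (Idx r p) ℝ :=
  Matrix.of fun j k => ∫ s in (0:ℝ)..t, (mexp (s • B) * A * (mexp (s • B))ᵀ) j k

/-- The Gaussian kernel
`Γ₀(t,x;s,y) = (2π)^{-d/2} |det C(s-t)|^{-1/2} exp(-⟨C(s-t)⁻¹(y-e^{(s-t)B}x), y-e^{(s-t)B}x⟩/2)`. -/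
def gauss (B A : Matrix (Idx r p) (Idx r p) ℝ)
    (t : ℝ) (x : Idx r p → ℝ) (s : ℝ) (y : Idx r p → ℝ) : ℝ :=
  (2 * Real.pi) ^ (-(Fintype.card (Idx r p) : ℝ) / 2) *
    |(covMat B A (s - t)).det| ^ (-(1:ℝ) / 2) *
    Real.exp (-(1/2) *
      ((covMat B A (s - t))⁻¹ *ᵥ (y - mexp ((s - t) • B) *ᵥ x)) ⬝ᵥ
        (y - mexp ((s - t) • B) *ᵥ x))

/-- Partial derivative `∂_{x_i}`. -/
def pdx (i : Idx r p) (f : (Idx r p → ℝ) → ℝ) : (Idx r p → ℝ) → ℝ :=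
  fun x => fderiv ℝ f x (Pi.single i 1)

/-- Iterated partial derivative `D^β = ∂_{x_1}^{β_1} ⋯ ∂_{x_d}^{β_d}`. -/
def Dx (β : Idx r p → ℕ) (f : (Idx r p → ℝ) → ℝ) : (Idx r p → ℝ) → ℝ :=
  (Finset.univ (α := Idx r p)).toList.foldr (fun i g => (pdx i)^[β i] g) f

/-- The indices of the first group (coordinates `1, …, p_0`). -/
def G0set (r : ℕ) (p : Fin (r + 1) → ℕ) : Finset (Idx r p) :=
  Finset.univ.filter fun i => (i.1 : ℕ) = 0

/-- A vector supported in the coordinates of the first group. -/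
def suppG0 (ξ : Idx r p → ℝ) : Prop := ∀ i : Idx r p, (i.1 : ℕ) ≠ 0 → ξ i = 0

/-- The vector field `Y f(t,x) = ⟨Bx, ∇_x f⟩ + ∂_t f`. -/
def Yop (B : Matrix (Idx r p) (Idx r p) ℝ)
    (f : ℝ → (Idx r p → ℝ) → ℝ) : ℝ → (Idx r p → ℝ) → ℝ :=
  fun t x => (∑ j, (B *ᵥ x) j * pdx j (f t) x) + deriv (fun τ => f τ x) t

/-- The derivative `Y^k ∂_x^β f`. -/
def YDx (B : Matrix (Idx r p) (Idx r p) ℝ) (k : ℕ) (β : Idx r p → ℕ)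
    (f : ℝ → (Idx r p → ℝ) → ℝ) : ℝ → (Idx r p → ℝ) → ℝ :=
  (Yop B)^[k] (fun t => Dx β (f t))

/-- The multi-index factorial `β! = Π_j (β_j)!`. -/
def mfact (β : Idx r p → ℕ) : ℕ := ∏ j, (β j).factorial

/-- The `n`-th order intrinsic Taylor polynomial of `a` centered at `z̄ = (tb, xb)`:
`T_n(a,z̄)(t,x) = Σ_{2k+|β|_B ≤ n} (1/(k!β!)) (Y^k ∂^β a)(z̄) (t-tb)^k (x-e^{(t-tb)B}xb)^β`,
with `T_n ≡ 0` for `n < 0`. -/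
def Tpoly (B : Matrix (Idx r p) (Idx r p) ℝ) (a : ℝ → (Idx r p → ℝ) → ℝ)
    (tb : ℝ) (xb : Idx r p → ℝ) (n : ℤ) : ℝ → (Idx r p → ℝ) → ℝ :=
  fun t x =>
    ∑ k ∈ Finset.range (n.toNat + 1),
      ∑ β ∈ Fintype.piFinset (fun _ : Idx r p => Finset.range (n.toNat + 1)),
        if 2 * (k : ℤ) + (bwt β : ℤ) ≤ n then
          ((k.factorial * mfact β : ℕ) : ℝ)⁻¹ * YDx B k β a tb xb * (t - tb) ^ k *
            ∏ j, (x j - (mexp ((t - tb) • B) *ᵥ xb) j) ^ β j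
        else 0

/-- `M̄(t) = e^{-tB} C(t) e^{-tBᵀ}`. -/
def Mbar (B A : Matrix (Idx r p) (Idx r p) ℝ) (t : ℝ) : Matrix (Idx r p) (Idx r p) ℝ :=
  mexp (-(t • B)) * covMat B A t * (mexp (-(t • B)))ᵀ

/-- The first order operator `M_i(t,x) f = (e^{tB}x)_i f + (e^{tB} M̄(t) ∇_x f)_i`. -/
def Mop (B A : Matrix (Idx r p) (Idx r p) ℝ) (τ : ℝ) (i : Idx r p)
    (f : (Idx r p → ℝ) → ℝ) : (Idx r p → ℝ) → ℝ :=
  fun x => (mexp (τ • B) *ᵥ x) i * f x + ((mexp (τ • B) * Mbar B A τ) *ᵥ fun j => pdx j f x) i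

/-- The composition `M^β = M_1^{β_1} ∘ ⋯ ∘ M_d^{β_d}`. -/
def Mpow (B A : Matrix (Idx r p) (Idx r p) ℝ) (τ : ℝ) (β : Idx r p → ℕ)
    (f : (Idx r p → ℝ) → ℝ) : (Idx r p → ℝ) → ℝ :=
  (Finset.univ (α := Idx r p)).toList.foldr (fun i g => (Mop B A τ i)^[β i] g) f

/-- The shifted operator `(M_i(τ,x) - c) f`. -/
def MopShift (B A : Matrix (Idx r p) (Idx r p) ℝ) (τ : ℝ) (c : ℝ) (i : Idx r p)
    (f : (Idx r p → ℝ) → ℝ) : (Idx r p → ℝ) → ℝ :=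
  fun x => Mop B A τ i f x - c * f x

/-- The composition `(M(τ,x) - c)^β` of shifted operators. -/
def MshiftPow (B A : Matrix (Idx r p) (Idx r p) ℝ) (τ : ℝ) (c : Idx r p → ℝ)
    (β : Idx r p → ℕ) (f : (Idx r p → ℝ) → ℝ) : (Idx r p → ℝ) → ℝ :=
  (Finset.univ (α := Idx r p)).toList.foldr (fun i g => (MopShift B A τ (c i) i)^[β i] g) f

/-- The operator `W_i(τ) f = (e^{-τBᵀ} ∇_x f)_i`. -/
def Wop (B : Matrix (Idx r p) (Idx r p) ℝ) (τ : ℝ) (i : Idx r p)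
    (f : (Idx r p → ℝ) → ℝ) : (Idx r p → ℝ) → ℝ :=
  fun x => (mexp (-(τ • Bᵀ)) *ᵥ fun j => pdx j f x) i

/-- The composition `W^β(τ) = W_1^{β_1}(τ) ∘ ⋯ ∘ W_d^{β_d}(τ)`. -/
def Wpow (B : Matrix (Idx r p) (Idx r p) ℝ) (τ : ℝ) (β : Idx r p → ℕ)
    (f : (Idx r p → ℝ) → ℝ) : (Idx r p → ℝ) → ℝ :=
  (Finset.univ (α := Idx r p)).toList.foldr (fun i g => (Wop B τ i)^[β i] g) f

/-- The Taylor polynomial `T_n(a,z̄)(s,·)` with the commuting operators `M_i(τ,x)` substituted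
for the spatial arguments. -/
def TpolyOp (B A : Matrix (Idx r p) (Idx r p) ℝ) (a : ℝ → (Idx r p → ℝ) → ℝ)
    (tb : ℝ) (xb : Idx r p → ℝ) (n : ℤ) (s τ : ℝ)
    (f : (Idx r p → ℝ) → ℝ) : (Idx r p → ℝ) → ℝ :=
  fun x =>
    ∑ k ∈ Finset.range (n.toNat + 1),
      ∑ β ∈ Fintype.piFinset (fun _ : Idx r p => Finset.range (n.toNat + 1)),
        if 2 * (k : ℤ) + (bwt β : ℤ) ≤ n then
          ((k.factorial * mfact β : ℕ) : ℝ)⁻¹ * YDx B k β a tb xb * (s - tb) ^ k *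
            MshiftPow B A τ (mexp ((s - tb) • B) *ᵥ xb) β f x
        else 0

/-- The operator `G_n(t,s,x)` of the expansion. -/
def Gop (B A : Matrix (Idx r p) (Idx r p) ℝ)
    (a : Idx r p → Idx r p → ℝ → (Idx r p → ℝ) → ℝ)
    (aD : Idx r p → ℝ → (Idx r p → ℝ) → ℝ) (tb : ℝ) (xb : Idx r p → ℝ)
    (n : ℤ) (t s : ℝ) (f : (Idx r p → ℝ) → ℝ) : (Idx r p → ℝ) → ℝ :=
  fun x =>
    (1/2) * ∑ i ∈ G0set r p, ∑ j ∈ G0set r p,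
        (TpolyOp B A (a i j) tb xb n s (s - t) (Wop B (s - t) i (Wop B (s - t) j f)) x
          - TpolyOp B A (a i j) tb xb (n - 1) s (s - t) (Wop B (s - t) i (Wop B (s - t) j f)) x)
      + ∑ i ∈ G0set r p,
        (TpolyOp B A (aD i) tb xb (n - 1) s (s - t) (Wop B (s - t) i f) x
          - TpolyOp B A (aD i) tb xb (n - 2) s (s - t) (Wop B (s - t) i f) x)

/-- `((K_n - K_{n-1}) g)(s,ξ)` for a purely spatial function `g`. -/
def Kdiff (B : Matrix (Idx r p) (Idx r p) ℝ)
    (a : Idx r p → Idx r p → ℝ → (Idx r p → ℝ) → ℝ)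
    (aD : Idx r p → ℝ → (Idx r p → ℝ) → ℝ) (tb : ℝ) (xb : Idx r p → ℝ)
    (n : ℤ) (g : (Idx r p → ℝ) → ℝ) (s : ℝ) (ξ : Idx r p → ℝ) : ℝ :=
  (1/2) * ∑ i ∈ G0set r p, ∑ j ∈ G0set r p,
      (Tpoly B (a i j) tb xb n s ξ - Tpoly B (a i j) tb xb (n - 1) s ξ) * pdx i (pdx j g) ξ
    + ∑ i ∈ G0set r p, (Tpoly B (aD i) tb xb (n - 1) s ξ - Tpoly B (aD i) tb xb (n - 2) s ξ) *
        pdx i g ξ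

/-- The matrix `A(z̄)` with top-left block `(a_{ij}(z̄))` and zeros elsewhere. -/
def AzMat (a : Idx r p → Idx r p → ℝ → (Idx r p → ℝ) → ℝ) (tb : ℝ) (xb : Idx r p → ℝ) :
    Matrix (Idx r p) (Idx r p) ℝ :=
  Matrix.of fun i j => if (i.1 : ℕ) = 0 ∧ (j.1 : ℕ) = 0 then a i j tb xb else 0

/-- `u₀(t,x) = ∫ Γ₀(t,x;T,y) φ(y) dy`. -/
def u0fn (B A : Matrix (Idx r p) (Idx r p) ℝ) (T : ℝ) (φ : (Idx r p → ℝ) → ℝ)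
    (t : ℝ) (x : Idx r p → ℝ) : ℝ :=
  ∫ y : Idx r p → ℝ, gauss B A t x T y * φ y

/-- The Duhamel recursion: `u_0 = ∫ Γ₀ φ` and
`u_n(t,x) = ∫_t^T ∫ Γ₀(t,x;s,ξ) Σ_{h=1}^n ((K_h - K_{h-1}) u_{n-h})(s,ξ) dξ ds`. -/
def useq (B : Matrix (Idx r p) (Idx r p) ℝ)
    (a : Idx r p → Idx r p → ℝ → (Idx r p → ℝ) → ℝ)
    (aD : Idx r p → ℝ → (Idx r p → ℝ) → ℝ) (tb : ℝ) (xb : Idx r p → ℝ)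
    (T : ℝ) (φ : (Idx r p → ℝ) → ℝ) : ℕ → ℝ → (Idx r p → ℝ) → ℝ
  | 0 => u0fn B (AzMat a tb xb) T φ
  | n + 1 => fun t x =>
      ∫ s in t..T, ∫ ξ : Idx r p → ℝ, gauss B (AzMat a tb xb) t x s ξ *
        ∑ h ∈ Finset.range (n + 1),
          Kdiff B a aD tb xb ((h : ℤ) + 1) (useq B a aD tb xb T φ (n - h) s) s ξ
  termination_by n => n
  decreasing_by omega

/-- Nested integral of a composition of operators `G_{i_1}(t,s_1) ⋯ G_{i_h}(t,s_h)` applied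
to `u`, over the simplex `lo ≤ s_1 ≤ ⋯ ≤ s_h ≤ T`. -/
def Lrec (B A : Matrix (Idx r p) (Idx r p) ℝ)
    (a : Idx r p → Idx r p → ℝ → (Idx r p → ℝ) → ℝ)
    (aD : Idx r p → ℝ → (Idx r p → ℝ) → ℝ) (tb : ℝ) (xb : Idx r p → ℝ)
    (t T : ℝ) (u : (Idx r p → ℝ) → ℝ) : List ℕ → ℝ → (Idx r p → ℝ) → ℝ
  | [] => fun _ => u
  | m :: ms => fun lo x =>
      ∫ s in lo..T, Gop B A a aD tb xb (m : ℤ) t s (Lrec B A a aD tb xb t T u ms s) x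

/-- The operator `L_n(t,T,x) = Σ_{h=1}^n ∫_t^T ds_1 ⋯ ∫_{s_{h-1}}^T ds_h
Σ_{i_1+⋯+i_h=n, i_j ≥ 1} G_{i_1}(t,s_1) ⋯ G_{i_h}(t,s_h)`. -/
def Lop (B A : Matrix (Idx r p) (Idx r p) ℝ)
    (a : Idx r p → Idx r p → ℝ → (Idx r p → ℝ) → ℝ)
    (aD : Idx r p → ℝ → (Idx r p → ℝ) → ℝ) (tb : ℝ) (xb : Idx r p → ℝ)
    (n : ℕ) (t T : ℝ) (u : (Idx r p → ℝ) → ℝ) : (Idx r p → ℝ) → ℝ :=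
  fun x => ∑ h ∈ Finset.Icc 1 n,
    ∑ iv ∈ (Fintype.piFinset fun _ : Fin h => Finset.Icc 1 n).filter (fun iv => ∑ j, iv j = n),
      Lrec B A a aD tb xb t T u (List.ofFn iv) t x

/-- The dilation matrix `D₀(λ) = diag(λ^{σ_1}, …, λ^{σ_d})`. -/
def D0mat (r : ℕ) (p : Fin (r + 1) → ℕ) (lam : ℝ) : Matrix (Idx r p) (Idx r p) ℝ :=
  Matrix.diagonal fun j => lam ^ sigmaWt j

/-- The index set `J_n` of Lemma A.8. -/
def Jset (r : ℕ) (p : Fin (r + 1) → ℕ) (n : ℕ) :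
    Finset ((Idx r p → ℕ) × (Idx r p → ℕ)) :=
  ((Fintype.piFinset fun _ : Idx r p => Finset.range (3 * n + 1)) ×ˢ
    (Fintype.piFinset fun _ : Idx r p => Finset.range (n + 1))).filter
    fun q => 1 ≤ ∑ j, q.1 j ∧ ∑ j, q.1 j ≤ 3 * n ∧ bwt q.2 ≤ n ∧
      0 ≤ (bwt q.1 : ℤ) - (bwt q.2 : ℤ) + (n : ℤ)

/-- The index set of pairs `(δ, α)` with `|δ| + |α| ≤ |β|` and `|δ|_B - |α|_B ≤ |β|_B`. -/
def Sset (β : Idx r p → ℕ) : Finset ((Idx r p → ℕ) × (Idx r p → ℕ)) :=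
  ((Fintype.piFinset fun _ : Idx r p => Finset.range (∑ j, β j + 1)) ×ˢ
    (Fintype.piFinset fun _ : Idx r p => Finset.range (∑ j, β j + 1))).filter
    fun q => (∑ j, q.1 j) + (∑ j, q.2 j) ≤ ∑ j, β j ∧
      (bwt q.1 : ℤ) - (bwt q.2 : ℤ) ≤ (bwt β : ℤ)

/-- The index set of multi-indices `α` with `|α| = |β|` and `|α|_B ≥ |β|_B`. -/
def Wset (β : Idx r p → ℕ) : Finset (Idx r p → ℕ) :=
  (Fintype.piFinset fun _ : Idx r p => Finset.range (∑ j, β j + 1)).filter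
    fun α => ∑ j, α j = ∑ j, β j ∧ bwt β ≤ bwt α

/-! ### Correlation with Schwartz functions -/

section Smoothing

open scoped SchwartzMap

variable {X : Type} [NormedAddCommGroup X] [NormedSpace ℝ X]

theorem schwartz_decay {F : Type} [NormedAddCommGroup F] [NormedSpace ℝ F] (g : 𝓢(X, F)) (k : ℕ) :
    ∃ D : ℝ, 0 ≤ D ∧ ∀ x, ‖g x‖ ≤ D * ((1 + ‖x‖) ^ k)⁻¹ := by
  refine ⟨2 ^ k * ((Finset.Iic (k, 0)).sup fun m => SchwartzMap.seminorm ℝ m.1 m.2) g,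
    by positivity, fun x => ?_⟩
  have h := SchwartzMap.one_add_le_sup_seminorm_apply (𝕜 := ℝ) (m := (k, 0)) (k := k) (n := 0)
    le_rfl le_rfl g x
  rw [norm_iteratedFDeriv_zero] at h
  rw [← div_eq_mul_inv, le_div_iff₀ (by positivity), mul_comm]
  exact h

/-- Decay of the integrand `f(y) g(y - z)` at any rate in `y`, at the price of a power of
`1 + ‖z‖`. It rests on `1 + ‖y‖ ≤ (1 + ‖y - z‖) (1 + ‖z‖)`, and it supplies the dominating function
for differentiation under the integral. -/
theorem shift_bound {F : Type} [NormedAddCommGroup F] [NormedSpace ℝ F] (g : 𝓢(X, F))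
    {f : X → ℝ} {C : ℝ} {k : ℕ} (hf : ∀ y, |f y| ≤ C * (1 + ‖y‖) ^ k) (m : ℕ) :
    ∃ D : ℝ, 0 ≤ D ∧ ∀ y z, ‖f y • g (y - z)‖ ≤
      D * (1 + ‖z‖) ^ (k + m) * ((1 + ‖y‖) ^ m)⁻¹ := by
  obtain ⟨D, hD, hg⟩ := schwartz_decay g (k + m)
  have hC : 0 ≤ C := by
    have := (abs_nonneg _).trans (hf 0)
    simpa using this
  refine ⟨C * D, by positivity, fun y z => ?_⟩
  have h1 : 1 + ‖y‖ ≤ (1 + ‖y - z‖) * (1 + ‖z‖) := by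
    have : ‖y‖ ≤ ‖y - z‖ + ‖z‖ := by simpa using norm_add_le (y - z) z
    nlinarith [norm_nonneg (y - z), norm_nonneg z]
  have h2 : ((1 + ‖y - z‖) ^ (k + m))⁻¹ ≤ (1 + ‖z‖) ^ (k + m) * ((1 + ‖y‖) ^ (k + m))⁻¹ := by
    rw [← div_eq_mul_inv, le_div_iff₀ (by positivity), ← div_eq_inv_mul,
      div_le_iff₀ (by positivity), ← mul_pow]
    exact pow_le_pow_left₀ (by positivity) (by rwa [mul_comm]) _
  calc ‖f y • g (y - z)‖ = |f y| * ‖g (y - z)‖ := by rw [norm_smul, Real.norm_eq_abs]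
    _ ≤ (C * (1 + ‖y‖) ^ k) * (D * ((1 + ‖z‖) ^ (k + m) * ((1 + ‖y‖) ^ (k + m))⁻¹)) := by
        gcongr
        · exact hf y
        · exact (hg _).trans (by gcongr)
    _ = C * D * (1 + ‖z‖) ^ (k + m) * ((1 + ‖y‖) ^ m)⁻¹ := by
        have : (1 + ‖y‖) ≠ 0 := by positivity
        rw [pow_add (1 + ‖y‖)]
        field_simp

variable [FiniteDimensional ℝ X] [MeasurableSpace X] [BorelSpace X]
  (ν : Measure X) [ν.IsAddHaarMeasure]

theorem integrable_inv_pow :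
    Integrable (fun y : X => ((1 + ‖y‖) ^ (Module.finrank ℝ X + 1))⁻¹) ν := by
  have := integrable_one_add_norm (E := X) (μ := ν) (r := (Module.finrank ℝ X + 1 : ℕ)) (by
    push_cast; linarith)
  refine this.congr (Filter.Eventually.of_forall fun y => ?_)
  simp only
  rw [Real.rpow_neg (by positivity), Real.rpow_natCast]

/-- The correlation `z ↦ ∫ f(y) g(y - z) dy` of a function of polynomial growth with a Schwartz
function. -/
def corr {F : Type} [NormedAddCommGroup F] [NormedSpace ℝ F] (f : X → ℝ) (g : X → F) (z : X) : F :=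
  ∫ y, f y • g (y - z) ∂ν

variable {f : X → ℝ} (hfc : Continuous f) {C : ℝ} {k : ℕ} (hf : ∀ y, |f y| ≤ C * (1 + ‖y‖) ^ k)
  {F : Type} [NormedAddCommGroup F] [NormedSpace ℝ F]

include hfc hf

theorem corr_integrable (g : 𝓢(X, F)) (z : X) : Integrable (fun y => f y • g (y - z)) ν := by
  obtain ⟨D, hD, h⟩ := shift_bound g hf (Module.finrank ℝ X + 1)
  refine ((integrable_inv_pow ν).const_mul
    (D * (1 + ‖z‖) ^ (k + (Module.finrank ℝ X + 1)))).mono' ?_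
    (Filter.Eventually.of_forall fun y => h y z)
  have : Continuous fun y => f y • g (y - z) := by have := g.continuous; fun_prop
  exact this.aestronglyMeasurable

omit hfc in
theorem corr_bound (g : 𝓢(X, F)) :
    ∃ (k' : ℕ) (C' : ℝ), ∀ z, ‖corr ν f g z‖ ≤ C' * (1 + ‖z‖) ^ k' := by
  obtain ⟨D, hD, h⟩ := shift_bound g hf (Module.finrank ℝ X + 1)
  refine ⟨k + (Module.finrank ℝ X + 1),
    D * ∫ y, ((1 + ‖y‖) ^ (Module.finrank ℝ X + 1))⁻¹ ∂ν, fun z => ?_⟩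
  calc ‖corr ν f g z‖
      ≤ ∫ y, D * (1 + ‖z‖) ^ (k + (Module.finrank ℝ X + 1)) *
          ((1 + ‖y‖) ^ (Module.finrank ℝ X + 1))⁻¹ ∂ν :=
        norm_integral_le_of_norm_le ((integrable_inv_pow ν).const_mul _)
          (Filter.Eventually.of_forall fun y => h y z)
    _ = _ := by rw [integral_const_mul]; ring

theorem corr_hasFDerivAt (g : 𝓢(X, F)) (z : X) :
    HasFDerivAt (corr ν f g) (-corr ν f (SchwartzMap.fderivCLM ℝ X F g) z) z := by
  set g' := SchwartzMap.fderivCLM ℝ X F g with hg'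
  obtain ⟨D, hD, h⟩ := shift_bound g' hf (Module.finrank ℝ X + 1)
  have key := hasFDerivAt_integral_of_dominated_of_fderiv_le (𝕜 := ℝ) (μ := ν)
    (F := fun z y => f y • g (y - z)) (F' := fun z y => -(f y • g' (y - z))) (x₀ := z)
    (s := Metric.ball z 1)
    (bound := fun y => D * (1 + (‖z‖ + 1)) ^ (k + (Module.finrank ℝ X + 1)) *
      ((1 + ‖y‖) ^ (Module.finrank ℝ X + 1))⁻¹) (Metric.ball_mem_nhds z one_pos)
    (Filter.Eventually.of_forall fun w => (corr_integrable ν hfc hf g w).aestronglyMeasurable)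
    (corr_integrable ν hfc hf g z)
    (corr_integrable ν hfc hf g' z).aestronglyMeasurable.neg
    (Filter.Eventually.of_forall fun y w hw => ?_)
    ((integrable_inv_pow ν).const_mul _)
    (Filter.Eventually.of_forall fun y w hw => ?_)
  · rw [integral_neg] at key
    exact key
  · rw [norm_neg]
    refine (h y w).trans ?_
    have : ‖w‖ ≤ ‖z‖ + 1 := by
      have h1 : ‖w - z‖ < 1 := by simpa [dist_eq_norm] using hw
      have h2 : ‖w‖ ≤ ‖w - z‖ + ‖z‖ := by simpa using norm_add_le (w - z) z
      linarith
    gcongr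
  · have h1 : HasFDerivAt (fun w : X => y - w) (-ContinuousLinearMap.id ℝ X) w :=
      (hasFDerivAt_id w).const_sub y
    have h2 := ((SchwartzMap.hasFDerivAt g (y - w)).comp w h1).const_smul (f y)
    refine h2.congr_fderiv ?_
    ext v
    change f y • (fderiv ℝ g (y - w)) (-v) = -(f y • (fderiv ℝ g (y - w)) v)
    rw [map_neg, smul_neg]

/-- Every derivative can be moved onto the Schwartz factor, so all derivatives of a correlation are
correlations themselves and grow polynomially. -/
theorem corr_temperate (g : 𝓢(X, F)) : (corr ν f g).HasTemperateGrowth := by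
  -- The target space is generalised because the derivative of `g : X → F` takes values in
  -- `X →L[ℝ] F`.
  have key : ∀ n : ℕ, ∀ (F : Type) [NormedAddCommGroup F] [NormedSpace ℝ F] (g : 𝓢(X, F)),
      ContDiff ℝ n (corr ν f g) ∧ ∃ (k : ℕ) (C : ℝ), ∀ x,
        ‖iteratedFDeriv ℝ n (corr ν f g) x‖ ≤ C * (1 + ‖x‖) ^ k := by
    intro n
    induction n with
    | zero =>
      intro F _ _ g
      refine ⟨?_, ?_⟩
      · simp only [Nat.cast_zero, contDiff_zero]
        exact continuous_iff_continuousAt.2 fun z => (corr_hasFDerivAt ν hfc hf g z).continuousAt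
      · simpa using corr_bound ν hf g
    | succ n ih =>
      intro F _ _ g
      have hd : fderiv ℝ (corr ν f g) = -corr ν f (SchwartzMap.fderivCLM ℝ X F g) :=
        funext fun z => (corr_hasFDerivAt ν hfc hf g z).fderiv
      obtain ⟨h1, k', C', h2⟩ := ih (X →L[ℝ] F) (SchwartzMap.fderivCLM ℝ X F g)
      refine ⟨?_, k', C', fun x => ?_⟩
      · push_cast
        rw [contDiff_succ_iff_fderiv]
        refine ⟨fun z => (corr_hasFDerivAt ν hfc hf g z).differentiableAt, by simp, ?_⟩
        rw [hd]
        exact h1.neg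
      · rw [← norm_iteratedFDeriv_fderiv, hd, iteratedFDeriv_neg_apply, norm_neg]
        exact h2 x
  exact ⟨contDiff_infty.2 fun n => (key n F g).1, fun n => (key n F g).2⟩

end Smoothing

/-! ### Gaussian densities -/

section GaussSchwartz

open scoped SchwartzMap

theorem one_add_pow_mul_exp_le (c : ℝ) (hc : 0 < c) (k : ℕ) (s : ℝ) (hs : 0 ≤ s) :
    (1 + s) ^ k * Real.exp (-c * s ^ 2) ≤ k.factorial * Real.exp (1 + 1 / (4 * c)) := by
  have h1 : (1 + s) ^ k ≤ k.factorial * Real.exp (1 + s) := by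
    have := Real.pow_div_factorial_le_exp (1 + s) (by positivity) k
    rwa [div_le_iff₀' (by positivity)] at this
  calc (1 + s) ^ k * Real.exp (-c * s ^ 2)
      ≤ (k.factorial * Real.exp (1 + s)) * Real.exp (-c * s ^ 2) := by gcongr
    _ = k.factorial * Real.exp (1 + s + -c * s ^ 2) := by rw [Real.exp_add (1 + s)]; ring
    _ ≤ _ := by
        refine mul_le_mul_of_nonneg_left (Real.exp_le_exp.2 ?_) (by positivity)
        -- `s - c s²` is largest at `s = 1 / (2c)`, with value `1 / (4c)`.
        have h2 : 0 ≤ c * (s - 1 / (2 * c)) ^ 2 := by positivity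
        have h3 : c * (s - 1 / (2 * c)) ^ 2 = c * s ^ 2 - s + 1 / (4 * c) := by
          field_simp
          ring
        linarith

theorem temperate_fderiv {X F : Type} [NormedAddCommGroup X] [NormedSpace ℝ X]
    [NormedAddCommGroup F] [NormedSpace ℝ F] {q : X → F} (hq : q.HasTemperateGrowth) :
    (fderiv ℝ q).HasTemperateGrowth := by
  refine ⟨hq.1.fderiv_right (by simp), fun n => ?_⟩
  obtain ⟨k, C, h⟩ := hq.2 (n + 1)
  exact ⟨k, C, fun x => by rw [norm_iteratedFDeriv_fderiv]; exact h x⟩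

/-- A rapidly decreasing function whose derivative is the function times a factor of temperate
growth is a Schwartz function. -/
theorem schwartz_of_logDeriv {X : Type} [NormedAddCommGroup X] [NormedSpace ℝ X] {G : X → ℝ}
    {L : X → X →L[ℝ] ℝ} (hL : L.HasTemperateGrowth) (hG : ∀ x, HasFDerivAt G (G x • L x) x)
    (hdec : ∀ k : ℕ, ∃ C, ∀ x, (1 + ‖x‖) ^ k * |G x| ≤ C) :
    ∃ g : 𝓢(X, ℝ), ∀ x, g x = G x := by
  have hcont : Continuous G := continuous_iff_continuousAt.2 fun x => (hG x).continuousAt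
  -- The derivative of `G • q` is `G • (q' + L ⊗ q)`, again of the form `G` times temperate growth.
  have key : ∀ n : ℕ, ∀ (F : Type) [NormedAddCommGroup F] [NormedSpace ℝ F] (q : X → F),
      q.HasTemperateGrowth → ContDiff ℝ n (fun x => G x • q x) ∧ ∀ k : ℕ, ∃ C : ℝ, ∀ x,
        ‖x‖ ^ k * ‖iteratedFDeriv ℝ n (fun x => G x • q x) x‖ ≤ C := by
    intro n
    induction n with
    | zero =>
      intro F _ _ q hq
      have hqc : Continuous q := hq.1.continuous
      refine ⟨by simp only [Nat.cast_zero, contDiff_zero]; fun_prop, fun k => ?_⟩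
      obtain ⟨l, D, hD⟩ := hq.2 0
      obtain ⟨C, hC⟩ := hdec (k + l)
      have hD0 : 0 ≤ D := by
        have := (norm_nonneg _).trans (hD 0)
        simpa using this
      refine ⟨D * C, fun x => ?_⟩
      have hDx := hD x
      rw [norm_iteratedFDeriv_zero] at hDx ⊢
      rw [norm_smul, Real.norm_eq_abs]
      calc ‖x‖ ^ k * (|G x| * ‖q x‖) ≤ (1 + ‖x‖) ^ k * (|G x| * (D * (1 + ‖x‖) ^ l)) := by
            gcongr; linarith
        _ = D * ((1 + ‖x‖) ^ (k + l) * |G x|) := by rw [pow_add]; ring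
        _ ≤ D * C := by gcongr; exact hC x
    | succ n ih =>
      intro F _ _ q hq
      have hqd : ∀ x, HasFDerivAt q (fderiv ℝ q x) x := fun x =>
        (hq.1.differentiable (by simp) x).hasFDerivAt
      have hd : ∀ x, HasFDerivAt (fun x => G x • q x)
          (G x • (fderiv ℝ q x + (L x).smulRight (q x))) x := by
        intro x
        refine ((hG x).smul (hqd x)).congr_fderiv ?_
        ext v
        simp [smul_smul]
      have hfd : fderiv ℝ (fun x => G x • q x) =
          fun x => G x • (fderiv ℝ q x + (L x).smulRight (q x)) := funext fun x => (hd x).fderiv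
      have hq' : (fun x => fderiv ℝ q x + (L x).smulRight (q x)).HasTemperateGrowth := by
        refine (temperate_fderiv hq).add ?_
        have := ContinuousLinearMap.bilinear_hasTemperateGrowth (𝕜 := ℝ)
          (ContinuousLinearMap.smulRightL ℝ X F) hL hq
        exact this
      obtain ⟨h1, h2⟩ := ih (X →L[ℝ] F) _ hq'
      refine ⟨?_, fun k => ?_⟩
      · push_cast
        rw [contDiff_succ_iff_fderiv]
        exact ⟨fun x => (hd x).differentiableAt, by simp, by rw [hfd]; exact h1⟩
      · obtain ⟨C, hC⟩ := h2 k
        refine ⟨C, fun x => ?_⟩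
        rw [← norm_iteratedFDeriv_fderiv, hfd]
        exact hC x
  have h1 := fun n => key n ℝ (fun _ => 1) (Function.HasTemperateGrowth.const 1)
  simp only [smul_eq_mul, mul_one] at h1
  exact ⟨⟨G, contDiff_infty.2 fun n => (h1 n).1, fun k n => (h1 n).2 k⟩, fun x => rfl⟩

end GaussSchwartz

section GaussDensity

open scoped SchwartzMap

variable {ι : Type} [Fintype ι] [DecidableEq ι]

open scoped MatrixOrder in
theorem posDef_factor {S : Matrix ι ι ℝ} (hS : S.PosDef) :
    ∃ R : Matrix ι ι ℝ, S = Rᵀ * R ∧ R.det ≠ 0 := by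
  obtain ⟨R, hR⟩ := CStarAlgebra.nonneg_iff_eq_star_mul_self.1 hS.posSemidef.nonneg
  rw [Matrix.star_eq_conjTranspose, Matrix.conjTranspose_eq_transpose_of_trivial] at hR
  refine ⟨R, hR, fun h => ?_⟩
  have := hS.det_pos
  rw [hR, Matrix.det_mul, h] at this
  simp at this

/-- The centred Gaussian density with covariance `C`. -/
def gdens (C : Matrix ι ι ℝ) (w : ι → ℝ) : ℝ :=
  (2 * Real.pi) ^ (-(Fintype.card ι : ℝ) / 2) * |C.det| ^ (-(1:ℝ) / 2) *
    Real.exp (-(1/2) * (C⁻¹ *ᵥ w) ⬝ᵥ w)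

/-- The linear map `w ↦ -⟨S w, ·⟩`, the logarithmic derivative of `exp (-⟨S w, w⟩ / 2)`. -/
def logDerivCLM (S : Matrix ι ι ℝ) : (ι → ℝ) →L[ℝ] (ι → ℝ) →L[ℝ] ℝ :=
  -∑ j, ((ContinuousLinearMap.proj (R := ℝ) (φ := fun _ : ι => ℝ) j).comp
    S.mulVecLin.toContinuousLinearMap).smulRight
      (ContinuousLinearMap.proj (R := ℝ) (φ := fun _ : ι => ℝ) j)

omit [DecidableEq ι] in
theorem logDerivCLM_apply (S : Matrix ι ι ℝ) (w v : ι → ℝ) :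
    logDerivCLM S w v = -((S *ᵥ w) ⬝ᵥ v) := by
  simp [logDerivCLM, dotProduct]

omit [DecidableEq ι] in
theorem hasFDerivAt_gaussExp {S : Matrix ι ι ℝ} (hS : Sᵀ = S) (w : ι → ℝ) :
    HasFDerivAt (fun w => Real.exp (-(1/2) * (S *ᵥ w) ⬝ᵥ w))
      (Real.exp (-(1/2) * (S *ᵥ w) ⬝ᵥ w) • logDerivCLM S w) w := by
  have h1 : HasFDerivAt (fun w : ι → ℝ => S *ᵥ w) S.mulVecLin.toContinuousLinearMap w :=
    S.mulVecLin.toContinuousLinearMap.hasFDerivAt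
  have h2 : HasFDerivAt (fun w : ι → ℝ => (S *ᵥ w) ⬝ᵥ w) _ w :=
    HasFDerivAt.fun_sum (u := Finset.univ) fun i _ =>
      ((hasFDerivAt_pi'.1 h1 i)).mul ((hasFDerivAt_pi'.1 (hasFDerivAt_id w) i))
  refine ((h2.const_mul (-(1/2))).exp).congr_fderiv ?_
  ext1 v
  have h3 : w ⬝ᵥ (S *ᵥ v) = (S *ᵥ w) ⬝ᵥ v := by
    rw [Matrix.dotProduct_mulVec, ← Matrix.mulVec_transpose, hS]
  change _ * (_ * (ContinuousLinearMap.toLinearMap (∑ i, _) v)) = _ * logDerivCLM S w v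
  rw [logDerivCLM_apply]
  congr 1
  have h4 : ∀ a b : ι → ℝ, a ⬝ᵥ b = ∑ i, a i * b i := fun a b => rfl
  simp [Finset.sum_add_distrib, ← h4]
  rw [h3]
  ring

/-- Coercivity of a positive definite quadratic form, with respect to the supremum norm of
`ι → ℝ`. -/
theorem quad_lower {S : Matrix ι ι ℝ} (hS : S.PosDef) :
    ∃ c : ℝ, 0 < c ∧ ∀ w, c * ‖w‖ ^ 2 ≤ (S *ᵥ w) ⬝ᵥ w := by
  obtain ⟨R, hR, hdet⟩ := posDef_factor hS
  set K := ‖(R⁻¹).mulVecLin.toContinuousLinearMap‖ with hK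
  refine ⟨((1 + K) ^ 2)⁻¹, by positivity, fun w => ?_⟩
  have h1 : (S *ᵥ w) ⬝ᵥ w = ∑ i, (R *ᵥ w) i ^ 2 := by
    rw [hR, ← Matrix.mulVec_mulVec, Matrix.mulVec_transpose, ← Matrix.dotProduct_mulVec]
    simp [dotProduct, pow_two]
  have h2 : ‖R *ᵥ w‖ ^ 2 ≤ ∑ i, (R *ᵥ w) i ^ 2 := by
    have h0 : 0 ≤ ∑ i, (R *ᵥ w) i ^ 2 := Finset.sum_nonneg fun i _ => sq_nonneg _
    rw [← Real.le_sqrt (norm_nonneg _) h0, pi_norm_le_iff_of_nonneg (Real.sqrt_nonneg _)]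
    intro i
    rw [Real.norm_eq_abs]
    apply Real.abs_le_sqrt
    exact Finset.single_le_sum (f := fun i => (R *ᵥ w) i ^ 2) (fun i _ => sq_nonneg _)
      (Finset.mem_univ i)
  have h3 : ‖w‖ ≤ (1 + K) * ‖R *ᵥ w‖ := by
    have h4 : (R⁻¹).mulVecLin.toContinuousLinearMap (R *ᵥ w) = w := by
      change R⁻¹ *ᵥ (R *ᵥ w) = w
      rw [Matrix.mulVec_mulVec, Matrix.nonsing_inv_mul _ (isUnit_iff_ne_zero.2 hdet),
        Matrix.one_mulVec]
    have h5 := (R⁻¹).mulVecLin.toContinuousLinearMap.le_opNorm (R *ᵥ w)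
    rw [h4] at h5
    refine h5.trans ?_
    gcongr
    linarith
  rw [h1, inv_mul_le_iff₀ (by positivity)]
  calc ‖w‖ ^ 2 ≤ ((1 + K) * ‖R *ᵥ w‖) ^ 2 := by gcongr
    _ = (1 + K) ^ 2 * ‖R *ᵥ w‖ ^ 2 := by ring
    _ ≤ _ := by gcongr

omit [Fintype ι] [DecidableEq ι] in
theorem posDef_symm {S : Matrix ι ι ℝ} (hS : S.PosDef) : Sᵀ = S := by
  have := hS.isHermitian.eq
  rwa [Matrix.conjTranspose_eq_transpose_of_trivial] at this

theorem hasFDerivAt_gdens {C : Matrix ι ι ℝ} (hC : C.PosDef) (w : ι → ℝ) :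
    HasFDerivAt (gdens C) (gdens C w • logDerivCLM C⁻¹ w) w := by
  have := (hasFDerivAt_gaussExp (posDef_symm hC.inv) w).const_mul
    ((2 * Real.pi) ^ (-(Fintype.card ι : ℝ) / 2) * |C.det| ^ (-(1:ℝ) / 2))
  rwa [smul_smul] at this

/-- The Gaussian density is a Schwartz function: it decays like `exp (-c ‖w‖²)` and its logarithmic
derivative is linear. -/
theorem gdens_schwartz {C : Matrix ι ι ℝ} (hC : C.PosDef) :
    ∃ g : 𝓢(ι → ℝ, ℝ), ∀ w, g w = gdens C w := by
  refine schwartz_of_logDeriv (logDerivCLM C⁻¹).hasTemperateGrowth (hasFDerivAt_gdens hC)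
    fun k => ?_
  obtain ⟨c, hc, h⟩ := quad_lower hC.inv
  set K := (2 * Real.pi) ^ (-(Fintype.card ι : ℝ) / 2) * |C.det| ^ (-(1:ℝ) / 2) with hK
  have hK0 : 0 ≤ K := by positivity
  refine ⟨K * (k.factorial * Real.exp (1 + 1 / (4 * (c / 2)))), fun w => ?_⟩
  have h1 : |gdens C w| ≤ K * Real.exp (-(c / 2) * ‖w‖ ^ 2) := by
    rw [gdens, ← hK, abs_mul, abs_of_nonneg hK0, abs_of_nonneg (Real.exp_pos _).le]
    refine mul_le_mul_of_nonneg_left (Real.exp_le_exp.2 ?_) hK0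
    have := h w
    linarith
  calc (1 + ‖w‖) ^ k * |gdens C w|
      ≤ (1 + ‖w‖) ^ k * (K * Real.exp (-(c / 2) * ‖w‖ ^ 2)) := by gcongr
    _ = K * ((1 + ‖w‖) ^ k * Real.exp (-(c / 2) * ‖w‖ ^ 2)) := by ring
    _ ≤ _ := by
        exact mul_le_mul_of_nonneg_left
          (one_add_pow_mul_exp_le (c / 2) (by positivity) k ‖w‖ (norm_nonneg _)) hK0

/-- The Gaussian integral, by the change of variables `z = R w` with `S = Rᵀ R`. -/
theorem integral_gaussExp {S : Matrix ι ι ℝ} (hS : S.PosDef) :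
    ∫ w : ι → ℝ, Real.exp (-(1/2) * (S *ᵥ w) ⬝ᵥ w)
      = (2 * Real.pi) ^ ((Fintype.card ι : ℝ) / 2) * |S.det| ^ (-(1:ℝ) / 2) := by
  obtain ⟨R, hR, hdet⟩ := posDef_factor hS
  have h0 : ∫ z : ι → ℝ, Real.exp (-(1/2) * ∑ i, z i ^ 2)
      = (2 * Real.pi) ^ ((Fintype.card ι : ℝ) / 2) := by
    have h1 : ∀ z : ι → ℝ, Real.exp (-(1/2) * ∑ i, z i ^ 2)
        = ∏ i, Real.exp (-(1/2) * z i ^ 2) := fun z => by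
      rw [Finset.mul_sum, Real.exp_sum]
    simp_rw [h1]
    rw [MeasureTheory.integral_fintype_prod_volume_eq_pow (fun x : ℝ => Real.exp (-(1/2) * x ^ 2)),
      integral_gaussian, Real.sqrt_eq_rpow, ← Real.rpow_mul_natCast (by positivity)]
    congr 1
    · ring
    · ring
  have h1 : ∀ w, (S *ᵥ w) ⬝ᵥ w = ∑ i, (toLin' R w) i ^ 2 := fun w => by
    rw [hR, ← Matrix.mulVec_mulVec, Matrix.mulVec_transpose, ← Matrix.dotProduct_mulVec]
    simp [dotProduct, pow_two]
  simp_rw [h1]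
  have hRc : Continuous (toLin' R) := LinearMap.continuous_of_finiteDimensional _
  have h2 := integral_map (μ := (volume : Measure (ι → ℝ))) (φ := toLin' R)
    hRc.measurable.aemeasurable (f := fun z => Real.exp (-(1/2) * ∑ i, z i ^ 2))
    (Real.continuous_exp.comp (by fun_prop)).aestronglyMeasurable
  rw [← h2, Real.map_matrix_volume_pi_eq_smul_volume_pi hdet, integral_smul_measure, h0,
    ENNReal.toReal_ofReal (abs_nonneg _), smul_eq_mul, mul_comm]
  congr 1
  rw [hR, Matrix.det_mul, Matrix.det_transpose, abs_mul, abs_inv, ← pow_two,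
    ← Real.rpow_natCast, ← Real.rpow_mul (abs_nonneg _), ← Real.rpow_neg_one]
  norm_num

end GaussDensity

/-! ### Gaussian smoothing -/

section GaussSmoothing

open scoped SchwartzMap

variable {ι : Type} [Fintype ι] [DecidableEq ι]

theorem temperate_bound {X : Type} [NormedAddCommGroup X] [NormedSpace ℝ X] {f : X → ℝ}
    (hf : f.HasTemperateGrowth) : ∃ (C : ℝ) (k : ℕ), ∀ y, |f y| ≤ C * (1 + ‖y‖) ^ k := by
  obtain ⟨k, C, h⟩ := hf.2 0
  exact ⟨C, k, fun y => by simpa using h y⟩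

/-- The smoothing operator `f ↦ ∫ f(y) Γ(y - E x) dy` with `Γ` the centred Gaussian density of
covariance `C`. -/
def gsm (C E : Matrix ι ι ℝ) (f : (ι → ℝ) → ℝ) (x : ι → ℝ) : ℝ :=
  ∫ y : ι → ℝ, gdens C (y - E *ᵥ x) * f y

theorem gdens_mul_integrable {C : Matrix ι ι ℝ} (hC : C.PosDef) {f : (ι → ℝ) → ℝ}
    (hfc : Continuous f) {D : ℝ} {k : ℕ} (hf : ∀ y, |f y| ≤ D * (1 + ‖y‖) ^ k) (z : ι → ℝ) :
    Integrable (fun y => gdens C (y - z) * f y) := by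
  obtain ⟨g, hg⟩ := gdens_schwartz hC
  refine (corr_integrable volume hfc hf g z).congr (Filter.Eventually.of_forall fun y => ?_)
  simp [hg, mul_comm]

theorem gdens_schwartz_fderiv {C : Matrix ι ι ℝ} (hC : C.PosDef) (g : 𝓢(ι → ℝ, ℝ))
    (hg : ∀ w, g w = gdens C w) (w v : ι → ℝ) :
    fderiv ℝ g w v = -((C⁻¹ *ᵥ w) ⬝ᵥ v) * g w := by
  have : (g : (ι → ℝ) → ℝ) = gdens C := funext hg
  rw [this, (hasFDerivAt_gdens hC w).fderiv]
  change gdens C w * logDerivCLM C⁻¹ w v = _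
  rw [logDerivCLM_apply]
  ring

theorem gsm_eq_corr {C : Matrix ι ι ℝ} (g : 𝓢(ι → ℝ, ℝ))
    (hg : ∀ w, g w = gdens C w) (E : Matrix ι ι ℝ) (f : (ι → ℝ) → ℝ) (x : ι → ℝ) :
    gsm C E f x = corr volume f g (E.mulVecLin.toContinuousLinearMap x) := by
  rw [gsm, corr]
  congr 1
  funext y
  rw [hg, smul_eq_mul, mul_comm]
  rfl

/-- Gaussian smoothing turns continuous functions of polynomial growth into smooth functions all of
whose derivatives have polynomial growth. -/
theorem gsm_temperate {C : Matrix ι ι ℝ} (hC : C.PosDef) (E : Matrix ι ι ℝ) {f : (ι → ℝ) → ℝ}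
    (hfc : Continuous f) {D : ℝ} {k : ℕ} (hf : ∀ y, |f y| ≤ D * (1 + ‖y‖) ^ k) :
    (gsm C E f).HasTemperateGrowth := by
  obtain ⟨g, hg⟩ := gdens_schwartz hC
  have : gsm C E f = corr volume f g ∘ E.mulVecLin.toContinuousLinearMap :=
    funext (gsm_eq_corr g hg E f)
  rw [this]
  exact (corr_temperate volume hfc hf g).comp
    (E.mulVecLin.toContinuousLinearMap).hasTemperateGrowth

omit [DecidableEq ι] in
theorem temperate_dirDeriv {f : (ι → ℝ) → ℝ} (hf : f.HasTemperateGrowth) (v : ι → ℝ) :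
    (fun x => fderiv ℝ f x v).HasTemperateGrowth :=
  (ContinuousLinearMap.apply ℝ ℝ v).hasTemperateGrowth.comp (temperate_fderiv hf)

omit [DecidableEq ι] in
/-- Differentiating a correlation amounts to differentiating the function of polynomial growth. -/
theorem corr_dirDeriv {f : (ι → ℝ) → ℝ} (hf : f.HasTemperateGrowth) (g : 𝓢(ι → ℝ, ℝ))
    (z v : ι → ℝ) :
    fderiv ℝ (corr volume f g) z v = corr volume (fun y => fderiv ℝ f y v) g z := by
  obtain ⟨D, k, hb⟩ := temperate_bound hf
  obtain ⟨D', k', hb'⟩ := temperate_bound (temperate_dirDeriv hf v)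
  have hfc := hf.1.continuous
  have hfc' := (temperate_dirDeriv hf v).1.continuous
  have hd : ∀ y, HasFDerivAt (fun y => g (y - z)) (fderiv ℝ g (y - z)) y := fun y =>
    (g.hasFDerivAt (y - z)).comp y ((hasFDerivAt_id y).sub_const z)
  have hI := corr_integrable volume hfc hb (SchwartzMap.fderivCLM ℝ (ι → ℝ) ℝ g) z
  have hparts := integral_mul_fderiv_eq_neg_fderiv_mul_of_integrable (𝕜 := ℝ)
    (μ := (volume : Measure (ι → ℝ))) (f := f) (g := fun y => g (y - z)) (v := v)
    (corr_integrable volume hfc' hb' g z)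
    (by
      have := (ContinuousLinearMap.apply ℝ ℝ v).integrable_comp hI
      refine this.congr (Filter.Eventually.of_forall fun y => ?_)
      simp only [(hd y).fderiv]
      simp [SchwartzMap.fderivCLM_apply])
    (corr_integrable volume hfc hb g z)
    (fun y _ => hf.1.differentiable (by simp) y) (fun y _ => (hd y).differentiableAt)
  rw [(corr_hasFDerivAt volume hfc hb g z).fderiv]
  change -(corr volume f (SchwartzMap.fderivCLM ℝ (ι → ℝ) ℝ g) z v) = _
  rw [corr, ContinuousLinearMap.integral_apply hI, corr, eq_comm]
  simp only [smul_eq_mul]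
  rw [← neg_eq_iff_eq_neg, ← hparts]
  refine integral_congr_ae (Filter.Eventually.of_forall fun y => ?_)
  simp only [(hd y).fderiv]
  simp [SchwartzMap.fderivCLM_apply]

theorem clm_apply_eq_sum (L : (ι → ℝ) →L[ℝ] ℝ) (v : ι → ℝ) :
    L v = ∑ l, v l * L (Pi.single l 1) := by
  conv_lhs => rw [pi_eq_sum_univ' v]
  rw [map_sum]
  refine Finset.sum_congr rfl fun l _ => ?_
  rw [map_smul, smul_eq_mul]

omit [DecidableEq ι] in
theorem temperate_coord (k : ι) : (fun y : ι → ℝ => y k).HasTemperateGrowth :=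
  (ContinuousLinearMap.proj (R := ℝ) (φ := fun _ : ι => ℝ) k).hasTemperateGrowth

/-- Commutation of Gaussian smoothing with partial derivatives. -/
theorem gsm_deriv {C : Matrix ι ι ℝ} (hC : C.PosDef) (E : Matrix ι ι ℝ) {f : (ι → ℝ) → ℝ}
    (hf : f.HasTemperateGrowth) (i : ι) (x : ι → ℝ) :
    fderiv ℝ (gsm C E f) x (Pi.single i 1)
      = ∑ l, E l i * gsm C E (fun y => fderiv ℝ f y (Pi.single l 1)) x := by
  obtain ⟨g, hg⟩ := gdens_schwartz hC
  obtain ⟨D, k, hb⟩ := temperate_bound hf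
  have h1 : gsm C E f = corr volume f g ∘ E.mulVecLin.toContinuousLinearMap :=
    funext (gsm_eq_corr g hg E f)
  rw [h1, fderiv_comp x (corr_hasFDerivAt volume hf.1.continuous hb g _).differentiableAt
    (ContinuousLinearMap.differentiableAt _), ContinuousLinearMap.fderiv]
  change fderiv ℝ (corr volume f g) _ (E *ᵥ Pi.single i 1) = _
  rw [clm_apply_eq_sum]
  refine Finset.sum_congr rfl fun l _ => ?_
  rw [corr_dirDeriv hf, gsm_eq_corr g hg]
  simp

/-- Commutation of Gaussian smoothing with multiplication by a coordinate; it expresses that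
`y - E x` times the density is `-C` times its gradient. -/
theorem gsm_coord {C : Matrix ι ι ℝ} (hC : C.PosDef) (E : Matrix ι ι ℝ) {f : (ι → ℝ) → ℝ}
    (hf : f.HasTemperateGrowth) (k : ι) (x : ι → ℝ) :
    gsm C E (fun y => y k * f y) x
      = (E *ᵥ x) k * gsm C E f x
        + ∑ l, C k l * gsm C E (fun y => fderiv ℝ f y (Pi.single l 1)) x := by
  obtain ⟨g, hg⟩ := gdens_schwartz hC
  obtain ⟨D, m, hb⟩ := temperate_bound hf
  obtain ⟨D', m', hb'⟩ := temperate_bound ((temperate_coord k).mul hf)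
  have hfc := hf.1.continuous
  have hfc' : Continuous fun y : ι → ℝ => y k * f y := by fun_prop
  set z := E.mulVecLin.toContinuousLinearMap x with hz
  have hI := corr_integrable volume hfc hb (SchwartzMap.fderivCLM ℝ (ι → ℝ) ℝ g) z
  -- As `∇Γ = -C⁻¹w Γ`, the derivative of `Γ` along the `k`-th row of `C` is `-w_k Γ`. The
  -- derivative of the correlation in that direction is computed twice: with all derivatives on `f`
  -- (`h1`), and with the derivative on `Γ` (`h3`).
  have h1 : fderiv ℝ (corr volume f g) z (C k)
      = ∑ l, C k l * gsm C E (fun y => fderiv ℝ f y (Pi.single l 1)) x := by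
    rw [clm_apply_eq_sum]
    refine Finset.sum_congr rfl fun l _ => ?_
    rw [corr_dirDeriv hf, gsm_eq_corr g hg]
  have hu : IsUnit C.det := hC.det_pos.ne'.isUnit
  have h2 : ∀ w : ι → ℝ, (C⁻¹ *ᵥ w) ⬝ᵥ C k = w k := by
    intro w
    rw [dotProduct_comm]
    change (C *ᵥ (C⁻¹ *ᵥ w)) k = w k
    rw [Matrix.mulVec_mulVec, Matrix.mul_nonsing_inv _ hu, Matrix.one_mulVec]
  have h3 : fderiv ℝ (corr volume f g) z (C k)
      = ∫ y, (y k * f y) • g (y - z) - z k * (f y • g (y - z)) := by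
    rw [(corr_hasFDerivAt volume hfc hb g z).fderiv]
    change -(corr volume f (SchwartzMap.fderivCLM ℝ (ι → ℝ) ℝ g) z (C k)) = _
    rw [corr, ContinuousLinearMap.integral_apply hI, ← integral_neg]
    refine integral_congr_ae (Filter.Eventually.of_forall fun y => ?_)
    change -(f y * (fderiv ℝ g (y - z) (C k))) = y k * f y * g (y - z) - z k * (f y * g (y - z))
    rw [gdens_schwartz_fderiv hC g hg, h2, Pi.sub_apply]
    ring
  rw [← h1, h3, integral_sub (corr_integrable volume hfc' hb' g z)
    ((corr_integrable volume hfc hb g z).const_mul _), integral_const_mul,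
    gsm_eq_corr g hg, gsm_eq_corr g hg]
  change corr volume (fun y => y k * f y) g z
    = z k * corr volume f g z
      + (corr volume (fun y => y k * f y) g z - z k * corr volume f g z)
  ring

/-- Chapman-Kolmogorov identity for Gaussian densities, obtained by completing the square. -/
theorem gdens_conv {C C₁ C₂ E : Matrix ι ι ℝ} (hC : C.PosDef) (hC₁ : C₁.PosDef) (hC₂ : C₂.PosDef)
    (hE : E.det ≠ 0) (h : C = E * C₁ * Eᵀ + C₂) (v : ι → ℝ) :
    ∫ w : ι → ℝ, gdens C₁ w * gdens C₂ (v - E *ᵥ w) = gdens C v := by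
  -- `H` is the Hessian in `w` of the sum of the two quadratic forms.
  set H := C₁⁻¹ + Eᵀ * C₂⁻¹ * E with hHdef
  have hu : IsUnit C.det := hC.det_pos.ne'.isUnit
  have hu₁ : IsUnit C₁.det := hC₁.det_pos.ne'.isUnit
  have hu₂ : IsUnit C₂.det := hC₂.det_pos.ne'.isUnit
  have hH : H.PosDef := by
    refine hC₁.inv.add_posSemidef ?_
    have := hC₂.inv.posSemidef.conjTranspose_mul_mul_same E
    rwa [Matrix.conjTranspose_eq_transpose_of_trivial] at this
  have hk : H * C₁ * Eᵀ = Eᵀ * C₂⁻¹ * C := by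
    rw [hHdef, h, add_mul, Matrix.nonsing_inv_mul _ hu₁, mul_add, add_mul, Matrix.one_mul,
      Matrix.mul_assoc Eᵀ C₂⁻¹ C₂, Matrix.nonsing_inv_mul _ hu₂, Matrix.mul_one, add_comm]
    simp only [Matrix.mul_assoc]
  have hCs := posDef_symm hC.inv
  have hC₁s := posDef_symm hC₁
  have hC₂s := posDef_symm hC₂.inv
  have hHs := posDef_symm hH
  -- `w₀` is the minimiser in `w` of the sum of the two quadratic forms.
  set w₀ := C₁ *ᵥ (Eᵀ *ᵥ (C⁻¹ *ᵥ v)) with hw₀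
  have hHw : H *ᵥ w₀ = Eᵀ *ᵥ (C₂⁻¹ *ᵥ v) := by
    rw [hw₀]
    simp only [Matrix.mulVec_mulVec, ← Matrix.mul_assoc]
    rw [hk, Matrix.mul_assoc, Matrix.mul_nonsing_inv _ hu, Matrix.mul_one]
  have hsw : ∀ (S : Matrix ι ι ℝ) (a b : ι → ℝ), (S *ᵥ a) ⬝ᵥ b = a ⬝ᵥ (Sᵀ *ᵥ b) := by
    intro S a b
    rw [Matrix.dotProduct_mulVec, Matrix.vecMul_transpose]
  have hq0 : (H *ᵥ w₀) ⬝ᵥ w₀ = (C₂⁻¹ *ᵥ v) ⬝ᵥ v - (C⁻¹ *ᵥ v) ⬝ᵥ v := by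
    have e1 : E *ᵥ w₀ = v - C₂ *ᵥ (C⁻¹ *ᵥ v) := by
      have : E * C₁ * Eᵀ = C - C₂ := by rw [h]; simp
      rw [hw₀]
      simp only [Matrix.mulVec_mulVec, ← Matrix.mul_assoc]
      rw [this, Matrix.sub_mul, Matrix.mul_nonsing_inv _ hu, Matrix.sub_mulVec, Matrix.one_mulVec]
    rw [hHw, hsw, Matrix.transpose_transpose, e1, dotProduct_sub]
    congr 1
    rw [hsw, hC₂s, Matrix.mulVec_mulVec, Matrix.nonsing_inv_mul _ hu₂, Matrix.one_mulVec,
      dotProduct_comm]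
  have hsq : ∀ w, (C₁⁻¹ *ᵥ w) ⬝ᵥ w + (C₂⁻¹ *ᵥ (v - E *ᵥ w)) ⬝ᵥ (v - E *ᵥ w)
      = (H *ᵥ (w - w₀)) ⬝ᵥ (w - w₀) + (C⁻¹ *ᵥ v) ⬝ᵥ v := by
    intro w
    have e1 : (C₂⁻¹ *ᵥ (E *ᵥ w)) ⬝ᵥ v = (H *ᵥ w₀) ⬝ᵥ w := by
      rw [hHw, hsw, hC₂s, hsw, dotProduct_comm]
    have e2 : (C₂⁻¹ *ᵥ v) ⬝ᵥ (E *ᵥ w) = (H *ᵥ w₀) ⬝ᵥ w := by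
      rw [hHw, hsw Eᵀ, Matrix.transpose_transpose]
    have e3 : (H *ᵥ w) ⬝ᵥ w = (C₁⁻¹ *ᵥ w) ⬝ᵥ w + (C₂⁻¹ *ᵥ (E *ᵥ w)) ⬝ᵥ (E *ᵥ w) := by
      rw [hHdef, Matrix.add_mulVec, add_dotProduct, ← Matrix.mulVec_mulVec, ← Matrix.mulVec_mulVec,
        hsw Eᵀ, Matrix.transpose_transpose]
    have e4 : (H *ᵥ w) ⬝ᵥ w₀ = (H *ᵥ w₀) ⬝ᵥ w := by
      rw [hsw, hHs, dotProduct_comm]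
    simp only [Matrix.mulVec_sub, sub_dotProduct, dotProduct_sub]
    rw [e1, e2, e3, e4, hq0]
    ring
  -- The normalising constants match by taking determinants in `hk`.
  have hdet : |H.det| * |C₁.det| * |C₂.det| = |C.det| := by
    have h1 := congrArg Matrix.det hk
    simp only [Matrix.det_mul, Matrix.det_transpose, Matrix.det_nonsing_inv] at h1
    rw [Ring.inverse_eq_inv'] at h1
    have h2 : H.det * C₁.det * C₂.det = C.det := by
      have h3 := hC₂.det_pos.ne'
      field_simp at h1
      linarith
    rw [← h2, abs_mul, abs_mul]
  set K := (2 * Real.pi) ^ (-(Fintype.card ι : ℝ) / 2) with hK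
  have hI : ∀ w, gdens C₁ w * gdens C₂ (v - E *ᵥ w)
      = (K * |C₁.det| ^ (-(1:ℝ) / 2) * (K * |C₂.det| ^ (-(1:ℝ) / 2)) *
          Real.exp (-(1/2) * (C⁻¹ *ᵥ v) ⬝ᵥ v)) *
        Real.exp (-(1/2) * (H *ᵥ (w - w₀)) ⬝ᵥ (w - w₀)) := by
    intro w
    have h1 : Real.exp (-(1/2) * (C₁⁻¹ *ᵥ w) ⬝ᵥ w) *
        Real.exp (-(1/2) * (C₂⁻¹ *ᵥ (v - E *ᵥ w)) ⬝ᵥ (v - E *ᵥ w))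
        = Real.exp (-(1/2) * (C⁻¹ *ᵥ v) ⬝ᵥ v) *
          Real.exp (-(1/2) * (H *ᵥ (w - w₀)) ⬝ᵥ (w - w₀)) := by
      rw [← Real.exp_add, ← Real.exp_add, ← mul_add, ← mul_add, hsq, add_comm]
    rw [mul_assoc _ _ (Real.exp (-(1/2) * (H *ᵥ (w - w₀)) ⬝ᵥ (w - w₀))), ← h1, gdens, gdens]
    ring
  simp_rw [hI]
  rw [integral_const_mul, integral_sub_right_eq_self
    (fun w => Real.exp (-(1/2) * (H *ᵥ w) ⬝ᵥ w)) w₀, integral_gaussExp hH, gdens, ← hK]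
  have hKK : K * (2 * Real.pi) ^ ((Fintype.card ι : ℝ) / 2) = 1 := by
    rw [hK, ← Real.rpow_add (by positivity), neg_div, neg_add_cancel, Real.rpow_zero]
  rw [← hdet, Real.mul_rpow (by positivity) (abs_nonneg _),
    Real.mul_rpow (abs_nonneg _) (abs_nonneg _)]
  linear_combination (K * |H.det| ^ (-(1:ℝ) / 2) * |C₁.det| ^ (-(1:ℝ) / 2) *
    |C₂.det| ^ (-(1:ℝ) / 2) * Real.exp (-(1/2) * (C⁻¹ *ᵥ v) ⬝ᵥ v)) * hKK

end GaussSmoothing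

/-! ### Matrix exponentials and positivity of the covariance -/

section MatrixExp

variable {r : ℕ} {p : Fin (r + 1) → ℕ}

open scoped Matrix.Norms.Operator in
theorem mexp_eq (M : Matrix (Idx r p) (Idx r p) ℝ) : mexp M = NormedSpace.exp M := by
  have h := NormedSpace.exp_series_hasSum_exp' (𝕂 := ℝ) M
  ext i j
  have h2 := (Pi.hasSum.1 ((Pi.hasSum.1 h) i)) j
  exact h2.tsum_eq

theorem mexp_zero : mexp (0 : Matrix (Idx r p) (Idx r p) ℝ) = 1 := by
  rw [mexp_eq, NormedSpace.exp_zero]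

theorem mexp_add (B : Matrix (Idx r p) (Idx r p) ℝ) (s t : ℝ) :
    mexp ((s + t) • B) = mexp (s • B) * mexp (t • B) := by
  rw [mexp_eq, mexp_eq, mexp_eq, add_smul, Matrix.exp_add_of_commute]
  exact ((Commute.refl B).smul_left s).smul_right t

theorem mexp_neg_mul (B : Matrix (Idx r p) (Idx r p) ℝ) (s : ℝ) :
    mexp (-(s • B)) * mexp (s • B) = 1 := by
  rw [← neg_smul, ← mexp_add, neg_add_cancel, zero_smul, mexp_zero]

theorem mexp_mul_neg (B : Matrix (Idx r p) (Idx r p) ℝ) (s : ℝ) :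
    mexp (s • B) * mexp (-(s • B)) = 1 := by
  rw [← neg_smul, ← mexp_add, add_neg_cancel, zero_smul, mexp_zero]

theorem mexp_transpose (M : Matrix (Idx r p) (Idx r p) ℝ) : mexp Mᵀ = (mexp M)ᵀ := by
  rw [mexp_eq, mexp_eq, Matrix.exp_transpose]

theorem mexp_det_ne (B : Matrix (Idx r p) (Idx r p) ℝ) (s : ℝ) : (mexp (s • B)).det ≠ 0 := by
  intro h
  have := congrArg Matrix.det (mexp_mul_neg B s)
  rw [Matrix.det_mul, h, Matrix.det_one] at this
  simp at this

open scoped Matrix.Norms.Operator in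
theorem mexp_hasDerivAt (B : Matrix (Idx r p) (Idx r p) ℝ) (s : ℝ) (i j : Idx r p) :
    HasDerivAt (fun u : ℝ => mexp (u • B) i j) ((mexp (s • B) * B) i j) s := by
  have h := hasDerivAt_exp_smul_const (𝕂 := ℝ) B s
  simp only [mexp_eq]
  exact (hasDerivAt_pi.1 ((hasDerivAt_pi.1 h) i)) j

theorem mexp_continuous (B : Matrix (Idx r p) (Idx r p) ℝ) (i j : Idx r p) :
    Continuous fun u : ℝ => mexp (u • B) i j :=
  continuous_iff_continuousAt.2 fun s => (mexp_hasDerivAt B s i j).continuousAt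

theorem mexp_continuous' (B : Matrix (Idx r p) (Idx r p) ℝ) :
    Continuous fun u : ℝ => mexp (u • B) :=
  continuous_pi fun i => continuous_pi fun j => mexp_continuous B i j

end MatrixExp

section Covariance

variable {r : ℕ} {p : Fin (r + 1) → ℕ}

theorem covIntegrand_continuous (B A : Matrix (Idx r p) (Idx r p) ℝ) (j k : Idx r p) :
    Continuous fun s : ℝ => (mexp (s • B) * A * (mexp (s • B))ᵀ) j k := by
  have h := mexp_continuous' B
  have h2 : Continuous fun s : ℝ => mexp (s • B) * A * (mexp (s • B))ᵀ := by fun_prop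
  exact h2.matrix_elem j k

theorem covMat_zero (B A : Matrix (Idx r p) (Idx r p) ℝ) : covMat B A 0 = 0 := by
  ext j k
  simp [covMat]

theorem covMat_continuous (B A : Matrix (Idx r p) (Idx r p) ℝ) :
    Continuous fun t : ℝ => covMat B A t :=
  continuous_pi fun j => continuous_pi fun k =>
    intervalIntegral.continuous_primitive
      (fun a b => (covIntegrand_continuous B A j k).intervalIntegrable a b) 0

theorem covMat_symm (B : Matrix (Idx r p) (Idx r p) ℝ) {A : Matrix (Idx r p) (Idx r p) ℝ}
    (hA : Aᵀ = A) (t : ℝ) : (covMat B A t)ᵀ = covMat B A t := by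
  ext j k
  simp only [Matrix.transpose_apply, covMat, Matrix.of_apply]
  congr 1
  funext s
  have h : (mexp (s • B) * A * (mexp (s • B))ᵀ)ᵀ = mexp (s • B) * A * (mexp (s • B))ᵀ := by
    rw [Matrix.transpose_mul, Matrix.transpose_mul, Matrix.transpose_transpose, hA,
      Matrix.mul_assoc]
  exact congrFun (congrFun h j) k

theorem sum_integral {ι : Type} [Fintype ι] (t : ℝ) (c : ι → ι → ℝ) (F : ι → ι → ℝ → ℝ)
    (hF : ∀ j k, Continuous (F j k)) :
    ∑ j, ∑ k, c j k * ∫ s in (0:ℝ)..t, F j k s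
      = ∫ s in (0:ℝ)..t, ∑ j, ∑ k, c j k * F j k s := by
  have h1 : ∀ j k, IntervalIntegrable (fun s => c j k * F j k s) volume 0 t := fun j k =>
    ((hF j k).const_mul _).intervalIntegrable _ _
  have h2 : ∀ j, IntervalIntegrable (fun s => ∑ k, c j k * F j k s) volume 0 t := fun j =>
    (continuous_finsetSum _ fun k _ => (hF j k).const_mul _).intervalIntegrable _ _
  rw [intervalIntegral.integral_finsetSum fun j _ => h2 j]
  refine Finset.sum_congr rfl fun j _ => ?_
  rw [intervalIntegral.integral_finsetSum fun k _ => h1 j k]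
  exact Finset.sum_congr rfl fun k _ => (intervalIntegral.integral_const_mul _ _).symm

/-- A linear combination of the entries of the covariance matrix, moved under the integral. -/
theorem sum_covMat (B A : Matrix (Idx r p) (Idx r p) ℝ) (t : ℝ) (c : Idx r p → Idx r p → ℝ) :
    ∑ j, ∑ k, c j k * covMat B A t j k
      = ∫ s in (0:ℝ)..t, ∑ j, ∑ k, c j k * (mexp (s • B) * A * (mexp (s • B))ᵀ) j k :=
  sum_integral t c (fun j k s => (mexp (s • B) * A * (mexp (s • B))ᵀ) j k)
    (covIntegrand_continuous B A)

theorem sandwich_apply (E X F : Matrix (Idx r p) (Idx r p) ℝ) (j k : Idx r p) :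
    (E * X * F) j k = ∑ a, ∑ b, (E j a * F b k) * X a b := by
  simp only [Matrix.mul_apply, Finset.sum_mul]
  rw [Finset.sum_comm]
  refine Finset.sum_congr rfl fun a _ => Finset.sum_congr rfl fun b _ => by ring

/-- The flow property of the covariance matrices. -/
theorem covMat_add (B A : Matrix (Idx r p) (Idx r p) ℝ) (s t : ℝ) :
    covMat B A (s + t) = mexp (t • B) * covMat B A s * (mexp (t • B))ᵀ + covMat B A t := by
  ext j k
  have hc := covIntegrand_continuous B A j k
  rw [Matrix.add_apply, sandwich_apply, sum_covMat]
  have h1 : ∀ u : ℝ, ∑ a, ∑ b, (mexp (t • B) j a * (mexp (t • B))ᵀ b k) *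
      (mexp (u • B) * A * (mexp (u • B))ᵀ) a b
      = (mexp ((u + t) • B) * A * (mexp ((u + t) • B))ᵀ) j k := by
    intro u
    rw [← sandwich_apply, add_comm u t, mexp_add, Matrix.transpose_mul]
    simp only [Matrix.mul_assoc]
  simp_rw [h1]
  rw [intervalIntegral.integral_comp_add_right
    (fun u => (mexp (u • B) * A * (mexp (u • B))ᵀ) j k), zero_add]
  refine Eq.trans ?_ (add_comm _ _)
  exact (intervalIntegral.integral_add_adjacent_intervals (μ := volume)
    (hc.intervalIntegrable 0 t) (hc.intervalIntegrable t (s + t))).symm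

theorem quad_covMat (B A : Matrix (Idx r p) (Idx r p) ℝ) (t : ℝ) (ξ : Idx r p → ℝ) :
    ξ ⬝ᵥ (covMat B A t *ᵥ ξ) = ∫ s in (0:ℝ)..t,
      ((mexp (s • B))ᵀ *ᵥ ξ) ⬝ᵥ (A *ᵥ ((mexp (s • B))ᵀ *ᵥ ξ)) := by
  have h1 : ∀ S : Matrix (Idx r p) (Idx r p) ℝ, ξ ⬝ᵥ (S *ᵥ ξ)
      = ∑ j, ∑ k, (ξ j * ξ k) * S j k := by
    intro S
    simp only [dotProduct, Matrix.mulVec, Finset.mul_sum]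
    refine Finset.sum_congr rfl fun a _ => Finset.sum_congr rfl fun b _ => by ring
  rw [h1, sum_covMat]
  congr 1
  funext s
  rw [← h1, ← Matrix.mulVec_mulVec, ← Matrix.mulVec_mulVec, Matrix.dotProduct_mulVec,
    ← Matrix.mulVec_transpose]

/-- The transpose of a block `B_i` of full row rank is injective. -/
theorem block_injective {B : Matrix (Idx r p) (Idx r p) ℝ} (hB : IsKolB B)
    {i k : Fin (r + 1)} (hik : (i : ℕ) = (k : ℕ) + 1) (v : Fin (p i) → ℝ)
    (hv : ∀ b : Fin (p k), ∑ a, B ⟨i, a⟩ ⟨k, b⟩ * v a = 0) : v = 0 := by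
  set S := Matrix.of fun (a : Fin (p i)) (b : Fin (p k)) => B ⟨i, a⟩ ⟨k, b⟩ with hS
  have hr : Sᵀ.rank = p i := by rw [Matrix.rank_transpose]; exact hB.rk i k hik
  have h1 := LinearMap.finrank_range_add_finrank_ker Sᵀ.mulVecLin
  rw [Module.finrank_fin_fun] at h1
  have h2 : Module.finrank ℝ (LinearMap.ker Sᵀ.mulVecLin) = 0 := by
    have : Module.finrank ℝ (LinearMap.range Sᵀ.mulVecLin) = p i := hr
    omega
  rw [Submodule.finrank_eq_zero] at h2
  refine LinearMap.ker_eq_bot'.1 h2 v ?_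
  ext b
  exact hv b

/-- The rank condition makes the pair `(B, Π₀)` observable: a vector is determined by the first
block of its images under the powers of `Bᵀ`. -/
theorem observable {B : Matrix (Idx r p) (Idx r p) ℝ} (hB : IsKolB B) (ζ : Idx r p → ℝ)
    (h : ∀ k : ℕ, ∀ i : Idx r p, (i.1 : ℕ) = 0 → ((Bᵀ ^ k) *ᵥ ζ) i = 0) : ζ = 0 := by
  -- Induction on the group: group `m` of `Bᵀ η` is the transpose of `B_{m+1}` applied to group
  -- `m + 1` of `η`, and that transpose is injective.
  have key : ∀ m : ℕ, ∀ k : ℕ, ∀ i : Idx r p, (i.1 : ℕ) = m → ((Bᵀ ^ k) *ᵥ ζ) i = 0 := by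
    intro m
    induction m with
    | zero => exact h
    | succ m ih =>
      intro k
      have hm : ∀ i : Fin (r + 1), (i : ℕ) = m + 1 →
          (fun a : Fin (p i) => ((Bᵀ ^ k) *ᵥ ζ) ⟨i, a⟩) = 0 := by
        intro i hi
        have hlt : m < r + 1 := by have := i.2; omega
        refine block_injective hB (k := ⟨m, hlt⟩) hi _ fun b => ?_
        have h1 := ih (k + 1) ⟨⟨m, hlt⟩, b⟩ rfl
        rw [pow_succ', ← Matrix.mulVec_mulVec] at h1
        rw [← h1]
        simp only [Matrix.mulVec, dotProduct, Matrix.transpose_apply]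
        rw [Fintype.sum_sigma, Finset.sum_eq_single i]
        · intro i' _ hne
          refine Finset.sum_eq_zero fun a _ => ?_
          rw [hB.sparse, zero_mul]
          intro he
          apply hne
          ext
          simp only at he
          omega
        · simp
      rintro ⟨i, a⟩ hi
      exact congrFun (hm i hi) a
  ext i
  have := key i.1 0 i rfl
  simpa using this

/-- Positive definiteness of the covariance matrix (the Kalman rank condition). -/
theorem covMat_posDef {B A : Matrix (Idx r p) (Idx r p) ℝ} (hB : IsKolB B) (hA : Aᵀ = A)
    {κ : ℝ} (hκ : 0 < κ) (hell : ∀ η : Idx r p → ℝ, κ * ∑ i ∈ G0set r p, η i ^ 2 ≤ η ⬝ᵥ (A *ᵥ η))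
    {t : ℝ} (ht : 0 < t) : (covMat B A t).PosDef := by
  refine Matrix.PosDef.of_dotProduct_mulVec_pos ?_ fun ξ hξ => ?_
  · rw [Matrix.IsHermitian, Matrix.conjTranspose_eq_transpose_of_trivial, covMat_symm B hA]
  · rw [star_trivial, quad_covMat]
    have hcont : Continuous fun s : ℝ => (mexp (s • B))ᵀ *ᵥ ξ := by
      have := mexp_continuous' B
      fun_prop
    have hη : ∀ η : Idx r p → ℝ, 0 ≤ η ⬝ᵥ (A *ᵥ η) := fun η =>
      le_trans (mul_nonneg hκ.le (Finset.sum_nonneg fun i _ => sq_nonneg _)) (hell η)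
    refine intervalIntegral.integral_pos ht (Continuous.continuousOn (by fun_prop))
      (fun s _ => hη _) ?_
    -- If the quadratic form of `C(t)` vanishes at `ξ`, then the first block of `e^{sBᵀ} ξ` is zero
    -- for all `s`. Differentiating `k` times in `s` gives the same for `e^{sBᵀ} (Bᵀ)^k ξ`, and
    -- observability yields `ξ = 0`.
    by_contra! hcon
    apply hξ
    have h0 : ∀ s ∈ Set.Icc 0 t, ∀ i : Idx r p, (i.1 : ℕ) = 0 → ((mexp (s • B))ᵀ *ᵥ ξ) i = 0 := by
      intro s hs i hi
      have h1 := (hell _).trans (hcon s hs)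
      have h2 : ∑ i ∈ G0set r p, ((mexp (s • B))ᵀ *ᵥ ξ) i ^ 2 ≤ 0 := by
        by_contra! hpos
        have := mul_pos hκ hpos
        linarith
      have h3 := Finset.single_le_sum (f := fun i => ((mexp (s • B))ᵀ *ᵥ ξ) i ^ 2)
        (fun i _ => sq_nonneg _) (show i ∈ G0set r p from by
          simp only [G0set, Finset.mem_filter, Finset.mem_univ, true_and]; exact hi)
      exact pow_eq_zero_iff (two_ne_zero) |>.1 (le_antisymm (h3.trans h2) (sq_nonneg _))
    have h1 : ∀ k : ℕ, ∀ s ∈ Set.Ioo 0 t, ∀ i : Idx r p, (i.1 : ℕ) = 0 →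
        ((mexp (s • Bᵀ) * Bᵀ ^ k) *ᵥ ξ) i = 0 := by
      intro k
      induction k with
      | zero =>
        intro s hs i hi
        rw [pow_zero, Matrix.mul_one, ← Matrix.transpose_smul, mexp_transpose]
        exact h0 s ⟨hs.1.le, hs.2.le⟩ i hi
      | succ k ih =>
        intro s hs i hi
        have hd : HasDerivAt (fun u : ℝ => ((mexp (u • Bᵀ) * Bᵀ ^ k) *ᵥ ξ) i)
            (((mexp (s • Bᵀ) * Bᵀ ^ (k + 1)) *ᵥ ξ) i) s := by
          have e : ∀ S : Matrix (Idx r p) (Idx r p) ℝ, ((S * Bᵀ ^ k) *ᵥ ξ) i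
              = ∑ l, S i l * ((Bᵀ ^ k) *ᵥ ξ) l := by
            intro S
            rw [← Matrix.mulVec_mulVec]
            rfl
          rw [pow_succ', ← Matrix.mul_assoc, e]
          simp only [e]
          exact HasDerivAt.fun_sum fun l _ => (mexp_hasDerivAt Bᵀ s i l).mul_const _
        have hz : (fun u : ℝ => ((mexp (u • Bᵀ) * Bᵀ ^ k) *ᵥ ξ) i) =ᶠ[nhds s] fun _ => 0 := by
          filter_upwards [Ioo_mem_nhds hs.1 hs.2] with u hu
          exact ih u hu i hi
        exact hd.unique ((hasDerivAt_const s (0:ℝ)).congr_of_eventuallyEq hz)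
    have hmid : t / 2 ∈ Set.Ioo 0 t := ⟨by linarith, by linarith⟩
    have hcomm : ∀ k : ℕ, Commute (mexp ((t / 2) • Bᵀ)) (Bᵀ ^ k) := by
      intro k
      rw [mexp_eq]
      exact (((Commute.refl Bᵀ).smul_left (t / 2)).pow_right k).exp_left
    have h2 : mexp ((t / 2) • Bᵀ) *ᵥ ξ = 0 := by
      refine observable hB _ fun k i hi => ?_
      rw [Matrix.mulVec_mulVec, ← (hcomm k).eq]
      exact h1 k _ hmid i hi
    have h3 := congrArg (fun v => mexp (-((t / 2) • Bᵀ)) *ᵥ v) h2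
    simpa [Matrix.mulVec_mulVec, mexp_neg_mul] using h3

end Covariance

/-! ### Separable families and the Gaussian transition operator -/

section Families

variable {r : ℕ} {p : Fin (r + 1) → ℕ}

/-- Families `H(θ, x)` that are finite sums of products `c(θ) f(x)` with `c` continuous and `f`
smooth of temperate growth. -/
inductive Fam : (ℝ → (Idx r p → ℝ) → ℝ) → Prop
  | base (c : ℝ → ℝ) (f : (Idx r p → ℝ) → ℝ) (hc : Continuous c) (hf : f.HasTemperateGrowth) :
      Fam fun θ x => c θ * f x
  | add (G H : ℝ → (Idx r p → ℝ) → ℝ) (hG : Fam G) (hH : Fam H) : Fam fun θ x => G θ x + H θ x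

variable {H G : ℝ → (Idx r p → ℝ) → ℝ}

theorem temperate_const_mul {f : (Idx r p → ℝ) → ℝ} (c : ℝ) (hf : f.HasTemperateGrowth) :
    (fun x => c * f x).HasTemperateGrowth :=
  (Function.HasTemperateGrowth.const c).mul hf

theorem Fam.temperate (hH : Fam H) (θ : ℝ) : (H θ).HasTemperateGrowth := by
  induction hH with
  | base c f hc hf => exact temperate_const_mul _ hf
  | add G H _ _ h1 h2 => exact h1.add h2

theorem Fam.continuous (hH : Fam H) (x : Idx r p → ℝ) : Continuous fun θ => H θ x := by
  induction hH with
  | base c f hc hf => fun_prop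
  | add G H _ _ h1 h2 => exact h1.add h2

theorem Fam.const {f : (Idx r p → ℝ) → ℝ} (hf : f.HasTemperateGrowth) : Fam fun _ => f := by
  simpa using Fam.base (fun _ => 1) f continuous_const hf

theorem Fam.zero : Fam fun (_ : ℝ) (_ : Idx r p → ℝ) => (0 : ℝ) :=
  Fam.const (Function.HasTemperateGrowth.const 0)

theorem Fam.coef (hH : Fam H) {c : ℝ → ℝ} (hc : Continuous c) : Fam fun θ x => c θ * H θ x := by
  induction hH with
  | base c' f hc' hf =>
    convert Fam.base (fun θ => c θ * c' θ) f (hc.mul hc') hf using 3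
    ring
  | add G H _ _ h1 h2 =>
    convert Fam.add _ _ h1 h2 using 3
    ring

theorem Fam.mul_temperate (hH : Fam H) {q : (Idx r p → ℝ) → ℝ} (hq : q.HasTemperateGrowth) :
    Fam fun θ x => q x * H θ x := by
  induction hH with
  | base c f hc hf =>
    convert Fam.base c (fun x => q x * f x) hc (hq.mul hf) using 3
    ring
  | add G H _ _ h1 h2 =>
    convert Fam.add _ _ h1 h2 using 3
    ring

theorem Fam.sum {α : Type*} (s : Finset α) {F : α → ℝ → (Idx r p → ℝ) → ℝ}
    (hF : ∀ a ∈ s, Fam (F a)) : Fam fun θ x => ∑ a ∈ s, F a θ x := by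
  classical
  induction s using Finset.induction_on with
  | empty => simpa using Fam.zero
  | insert a s ha ih =>
    simp only [Finset.sum_insert ha]
    exact Fam.add _ _ (hF a (Finset.mem_insert_self _ _))
      (ih fun b hb => hF b (Finset.mem_insert_of_mem hb))

theorem pdx_const_mul {f : (Idx r p → ℝ) → ℝ} (hf : f.HasTemperateGrowth) (c : ℝ) (j : Idx r p)
    (x : Idx r p → ℝ) : pdx j (fun x => c * f x) x = c * pdx j f x := by
  rw [pdx, fderiv_const_mul (hf.1.differentiable (by simp) x)]
  rfl

theorem pdx_add {f g : (Idx r p → ℝ) → ℝ} (hf : f.HasTemperateGrowth) (hg : g.HasTemperateGrowth)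
    (j : Idx r p) (x : Idx r p → ℝ) : pdx j (fun x => f x + g x) x = pdx j f x + pdx j g x := by
  rw [pdx, fderiv_fun_add (hf.1.differentiable (by simp) x) (hg.1.differentiable (by simp) x)]
  rfl

theorem pdx_temperate {f : (Idx r p → ℝ) → ℝ} (hf : f.HasTemperateGrowth) (j : Idx r p) :
    (pdx j f).HasTemperateGrowth := temperate_dirDeriv hf _

theorem Fam.pdx (hH : Fam H) (j : Idx r p) : Fam fun θ => pdx j (H θ) := by
  induction hH with
  | base c f hc hf =>
    convert Fam.base c (_root_.pdx j f) hc (pdx_temperate hf j) using 3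
    exact pdx_const_mul hf _ j _
  | add G H hG hH h1 h2 =>
    convert Fam.add _ _ h1 h2 using 3
    exact pdx_add (hG.temperate _) (hH.temperate _) j _

theorem Fam.integral (hH : Fam H) (T : ℝ) : Fam fun lo x => ∫ s in lo..T, H s x := by
  induction hH with
  | base c f hc hf =>
    have hcont : Continuous fun lo => ∫ s in lo..T, c s := by
      have : (fun lo => ∫ s in lo..T, c s) = fun lo => -∫ s in T..lo, c s :=
        funext fun lo => intervalIntegral.integral_symm _ _
      rw [this]
      exact (intervalIntegral.continuous_primitive (fun a b => hc.intervalIntegrable a b) T).neg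
    convert Fam.base (fun lo => ∫ s in lo..T, c s) f hcont hf using 3
    exact intervalIntegral.integral_mul_const _ _
  | add G H hG hH h1 h2 =>
    convert Fam.add _ _ h1 h2 using 3
    exact intervalIntegral.integral_add ((hG.continuous _).intervalIntegrable _ _)
      ((hH.continuous _).intervalIntegrable _ _)

end Families

section Smoother

variable {r : ℕ} {p : Fin (r + 1) → ℕ} {B A : Matrix (Idx r p) (Idx r p) ℝ} {τ : ℝ}

/-- The Gaussian transition operator over a time span `τ`. -/
def Psm (B A : Matrix (Idx r p) (Idx r p) ℝ) (τ : ℝ) (f : (Idx r p → ℝ) → ℝ) :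
    (Idx r p → ℝ) → ℝ :=
  gsm (covMat B A τ) (mexp (τ • B)) f

theorem integral_gauss_eq_Psm (t s : ℝ) (f : (Idx r p → ℝ) → ℝ) (x : Idx r p → ℝ) :
    ∫ y, gauss B A t x s y * f y = Psm B A (s - t) f x := rfl

variable (hC : (covMat B A τ).PosDef)
include hC

theorem Psm_temperate {f : (Idx r p → ℝ) → ℝ} (hf : f.HasTemperateGrowth) :
    (Psm B A τ f).HasTemperateGrowth := by
  obtain ⟨D, k, hb⟩ := temperate_bound hf
  exact gsm_temperate hC _ hf.1.continuous hb

theorem Psm_add {f g : (Idx r p → ℝ) → ℝ} (hf : f.HasTemperateGrowth) (hg : g.HasTemperateGrowth)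
    (x : Idx r p → ℝ) : Psm B A τ (fun y => f y + g y) x = Psm B A τ f x + Psm B A τ g x := by
  obtain ⟨D, k, hb⟩ := temperate_bound hf
  obtain ⟨D', k', hb'⟩ := temperate_bound hg
  rw [Psm, gsm, Psm, gsm, Psm, gsm, ← integral_add
    (gdens_mul_integrable hC hf.1.continuous hb _) (gdens_mul_integrable hC hg.1.continuous hb' _)]
  simp only [mul_add]

omit hC in
theorem Psm_const_mul (c : ℝ) (f : (Idx r p → ℝ) → ℝ)
    (x : Idx r p → ℝ) : Psm B A τ (fun y => c * f y) x = c * Psm B A τ f x := by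
  rw [Psm, gsm, Psm, gsm, ← integral_const_mul]
  simp only [mul_left_comm]

omit hC in
theorem Psm_zero (x : Idx r p → ℝ) : Psm B A τ (fun _ => 0) x = 0 := by
  simp [Psm, gsm]

theorem Psm_sum {α : Type*} (s : Finset α) {F : α → (Idx r p → ℝ) → ℝ}
    (hF : ∀ a ∈ s, (F a).HasTemperateGrowth) (x : Idx r p → ℝ) :
    Psm B A τ (fun y => ∑ a ∈ s, F a y) x = ∑ a ∈ s, Psm B A τ (F a) x := by
  classical
  induction s using Finset.induction_on with
  | empty => simpa using Psm_zero x
  | insert a s ha ih =>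
    simp only [Finset.sum_insert ha]
    rw [Psm_add hC (hF a (Finset.mem_insert_self _ _))
      (Function.HasTemperateGrowth.sum fun b hb => hF b (Finset.mem_insert_of_mem hb)),
      ih fun b hb => hF b (Finset.mem_insert_of_mem hb)]

/-- The transition operator commutes with integration of a family in its parameter. -/
theorem Fam.Psm_integral {H : ℝ → (Idx r p → ℝ) → ℝ} (hH : Fam H) (T : ℝ) (x : Idx r p → ℝ) :
    (Continuous fun s => Psm B A τ (H s) x) ∧ ∀ lo,
      Psm B A τ (fun y => ∫ s in lo..T, H s y) x = ∫ s in lo..T, Psm B A τ (H s) x := by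
  induction hH with
  | base c f hc hf =>
    have h : ∀ s, Psm B A τ (fun y => c s * f y) x = c s * Psm B A τ f x := fun s =>
      Psm_const_mul _ _ _
    simp only [h, intervalIntegral.integral_mul_const, Psm_const_mul]
    exact ⟨by fun_prop, fun _ => trivial⟩
  | add G H hG hH h1 h2 =>
    have h : ∀ s, Psm B A τ (fun y => G s y + H s y) x = Psm B A τ (G s) x + Psm B A τ (H s) x :=
      fun s => Psm_add hC (hG.temperate s) (hH.temperate s) x
    simp only [h]
    refine ⟨h1.1.add h2.1, fun lo => ?_⟩
    rw [intervalIntegral.integral_add (h1.1.intervalIntegrable _ _) (h2.1.intervalIntegrable _ _),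
      ← h1.2, ← h2.2, ← Psm_add hC ((hG.integral T).temperate lo) ((hH.integral T).temperate lo)]
    congr 1
    funext y
    exact intervalIntegral.integral_add ((hG.continuous y).intervalIntegrable _ _)
      ((hH.continuous y).intervalIntegrable _ _)

/-- In vector form `∇ (P f) = e^{τ Bᵀ} P (∇ f)`. -/
theorem Psm_grad {f : (Idx r p → ℝ) → ℝ} (hf : f.HasTemperateGrowth) (x : Idx r p → ℝ) :
    (fun j => pdx j (Psm B A τ f) x) = (mexp (τ • B))ᵀ *ᵥ fun l => Psm B A τ (pdx l f) x :=
  funext fun i => gsm_deriv hC _ hf i x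

theorem Psm_pdx {f : (Idx r p → ℝ) → ℝ} (hf : f.HasTemperateGrowth) (x : Idx r p → ℝ) :
    (fun l => Psm B A τ (pdx l f) x) = fun l => Wop B τ l (Psm B A τ f) x := by
  have h : (fun l => Wop B τ l (Psm B A τ f) x)
      = mexp (-(τ • Bᵀ)) *ᵥ fun j => pdx j (Psm B A τ f) x := rfl
  rw [h, Psm_grad hC hf, Matrix.mulVec_mulVec, ← mexp_transpose, Matrix.transpose_smul,
    mexp_neg_mul, Matrix.one_mulVec]

theorem Psm_mulVec (S : Matrix (Idx r p) (Idx r p) ℝ) {F : Idx r p → (Idx r p → ℝ) → ℝ}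
    (hF : ∀ j, (F j).HasTemperateGrowth) (i : Idx r p) (x : Idx r p → ℝ) :
    Psm B A τ (fun y => (S *ᵥ fun j => F j y) i) x = (S *ᵥ fun j => Psm B A τ (F j) x) i := by
  simp only [Matrix.mulVec, dotProduct]
  rw [Psm_sum hC _ fun j _ => temperate_const_mul _ (hF j)]
  exact Finset.sum_congr rfl fun j _ => Psm_const_mul _ _ _

/-- Conjugation by the transition operator shifts the time argument of `W_i`:
`P_τ W_i(τ') = W_i(τ + τ') P_τ`. -/
theorem Psm_Wop {f : (Idx r p → ℝ) → ℝ} (hf : f.HasTemperateGrowth) (τ' : ℝ) (i : Idx r p) :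
    Psm B A τ (Wop B τ' i f) = Wop B (τ + τ') i (Psm B A τ f) := by
  funext x
  change Psm B A τ (fun y => (mexp (-(τ' • Bᵀ)) *ᵥ fun j => pdx j f y) i) x = _
  rw [Psm_mulVec hC _ (fun j => pdx_temperate hf j), Psm_pdx hC hf]
  change (mexp (-(τ' • Bᵀ)) *ᵥ (mexp (-(τ • Bᵀ)) *ᵥ fun j => pdx j (Psm B A τ f) x)) i
    = (mexp (-((τ + τ') • Bᵀ)) *ᵥ fun j => pdx j (Psm B A τ f) x) i
  rw [Matrix.mulVec_mulVec, ← neg_smul, ← neg_smul, ← neg_smul, ← mexp_add]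
  congr 4
  ring

omit hC in
/-- The operator `M_i` in the form `(e^{τB}x)_i + (C(τ) W(τ))_i`. -/
theorem Mop_eq (τ : ℝ) (i : Idx r p) (f : (Idx r p → ℝ) → ℝ) (x : Idx r p → ℝ) :
    Mop B A τ i f x = (mexp (τ • B) *ᵥ x) i * f x
      + (covMat B A τ *ᵥ fun l => Wop B τ l f x) i := by
  have h : (fun l => Wop B τ l f x) = mexp (-(τ • Bᵀ)) *ᵥ fun j => pdx j f x := rfl
  rw [Mop, h, Matrix.mulVec_mulVec, Mbar, Matrix.mul_assoc, ← Matrix.mul_assoc (mexp (τ • B)),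
    mexp_mul_neg, Matrix.one_mul, ← mexp_transpose, Matrix.transpose_neg, Matrix.transpose_smul]

omit hC in
theorem Wop_temperate {f : (Idx r p → ℝ) → ℝ} (hf : f.HasTemperateGrowth) (τ' : ℝ) (i : Idx r p) :
    (Wop B τ' i f).HasTemperateGrowth :=
  Function.HasTemperateGrowth.sum fun j _ => temperate_const_mul _ (pdx_temperate hf j)

/-- Conjugation by the transition operator turns multiplication by `x_k` into `M_k`. -/
theorem Psm_coord {f : (Idx r p → ℝ) → ℝ} (hf : f.HasTemperateGrowth) (k : Idx r p)
    (x : Idx r p → ℝ) : Psm B A τ (fun y => y k * f y) x = Mop B A τ k (Psm B A τ f) x := by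
  rw [Mop_eq, ← Psm_pdx hC hf]
  exact gsm_coord hC _ hf k x

/-- Conjugation by the transition operator shifts the time argument of `M_i`:
`P_τ M_i(τ') = M_i(τ + τ') P_τ`. The matrix identity behind it is the flow property
`covMat_add`. -/
theorem Psm_Mop {f : (Idx r p → ℝ) → ℝ} (hf : f.HasTemperateGrowth) (τ' : ℝ) (i : Idx r p) :
    Psm B A τ (Mop B A τ' i f) = Mop B A (τ + τ') i (Psm B A τ f) := by
  funext x
  have h1 : Mop B A τ' i f = fun y => (mexp (τ' • B) *ᵥ fun k => y k * f y) i
      + (covMat B A τ' *ᵥ fun l => Wop B τ' l f y) i := by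
    funext y
    rw [Mop_eq]
    congr 1
    simp only [Matrix.mulVec, dotProduct, Finset.sum_mul, mul_assoc]
  have hc : ∀ k, (fun y : Idx r p → ℝ => y k * f y).HasTemperateGrowth := fun k =>
    (temperate_coord k).mul hf
  have t1 : (fun y => (mexp (τ' • B) *ᵥ fun k => y k * f y) i).HasTemperateGrowth :=
    Function.HasTemperateGrowth.sum fun j _ => temperate_const_mul _ (hc j)
  have t2 : (fun y => (covMat B A τ' *ᵥ fun l => Wop B τ' l f y) i).HasTemperateGrowth :=
    Function.HasTemperateGrowth.sum fun j _ => temperate_const_mul _ (Wop_temperate hf τ' j)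
  rw [h1, Psm_add hC t1 t2,
    Psm_mulVec hC _ hc, Psm_mulVec hC _ (fun j => Wop_temperate hf τ' j)]
  simp only [Psm_coord hC hf, Psm_Wop hC hf]
  have h2 : (fun k => Mop B A τ k (Psm B A τ f) x) = Psm B A τ f x • (mexp (τ • B) *ᵥ x)
      + covMat B A τ *ᵥ (mexp (-(τ • Bᵀ)) *ᵥ fun j => pdx j (Psm B A τ f) x) := by
    funext k
    rw [Mop_eq, Pi.add_apply, Pi.smul_apply, smul_eq_mul, mul_comm]
    rfl
  have h3 : ∀ σ, (fun l => Wop B σ l (Psm B A τ f) x)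
    = mexp (-(σ • Bᵀ)) *ᵥ fun j => pdx j (Psm B A τ f) x := fun σ => rfl
  have h4 : (mexp (τ' • B))ᵀ * mexp (-((τ + τ') • Bᵀ)) = mexp (-(τ • Bᵀ)) := by
    rw [← mexp_transpose, Matrix.transpose_smul, ← neg_smul, ← neg_smul, ← mexp_add]
    congr 2
    ring
  rw [Mop_eq, h2, h3, covMat_add, ← h4, add_comm τ τ', mexp_add, Matrix.mulVec_add,
    Matrix.mulVec_smul, Matrix.add_mulVec]
  simp only [Matrix.mulVec_mulVec, Matrix.mul_assoc, Pi.add_apply, Pi.smul_apply, smul_eq_mul]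
  ring

end Smoother

/-! ### Intertwined operator families -/

section Intertwining

variable {r : ℕ} {p : Fin (r + 1) → ℕ} {B A : Matrix (Idx r p) (Idx r p) ℝ} {τ : ℝ}

/-- Two operator families `O'`, `O` depending on a parameter `θ` are *intertwined* by the
transition operator `P` over the span `τ` if `P ∘ O'(θ) = O(θ) ∘ P` on smooth functions of
temperate growth. The first family is moreover required to be additive and to preserve the families
`Fam`: this stability is what makes the time integrals of iterated operators meaningful and
interchangeable with `P`. -/
structure Tw (B A : Matrix (Idx r p) (Idx r p) ℝ) (τ : ℝ)
    (O' O : ℝ → ((Idx r p → ℝ) → ℝ) → (Idx r p → ℝ) → ℝ) : Prop where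
  fam : ∀ H, Fam H → Fam fun θ => O' θ (H θ)
  comm : ∀ θ f, f.HasTemperateGrowth → Psm B A τ (O' θ f) = O θ (Psm B A τ f)
  add : ∀ θ f g, f.HasTemperateGrowth → g.HasTemperateGrowth →
    O' θ (fun x => f x + g x) = fun x => O' θ f x + O' θ g x

namespace Tw

variable {O' O P' P Q' Q : ℝ → ((Idx r p → ℝ) → ℝ) → (Idx r p → ℝ) → ℝ}

theorem temperate (h : Tw B A τ O' O) {f : (Idx r p → ℝ) → ℝ} (hf : f.HasTemperateGrowth) (θ : ℝ) :
    (O' θ f).HasTemperateGrowth := (h.fam _ (Fam.const hf)).temperate θ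

theorem id : Tw B A τ (fun _ f => f) (fun _ f => f) :=
  ⟨fun _ h => h, fun _ _ _ => rfl, fun _ _ _ _ _ => rfl⟩

theorem comp (h1 : Tw B A τ P' P) (h2 : Tw B A τ Q' Q) :
    Tw B A τ (fun θ f => P' θ (Q' θ f)) (fun θ f => P θ (Q θ f)) where
  fam H hH := h1.fam _ (h2.fam _ hH)
  comm θ f hf := by rw [h1.comm θ _ (h2.temperate hf θ), h2.comm θ f hf]
  add θ f g hf hg := by
    rw [h2.add θ f g hf hg, h1.add θ _ _ (h2.temperate hf θ) (h2.temperate hg θ)]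

theorem zero : Tw B A τ (fun _ _ _ => 0) (fun _ _ _ => 0) :=
  ⟨fun _ _ => Fam.zero, fun _ _ _ => funext fun x => Psm_zero x, fun _ _ _ _ _ => by simp⟩

theorem coef (h : Tw B A τ P' P) {c : ℝ → ℝ} (hc : Continuous c) :
    Tw B A τ (fun θ f x => c θ * P' θ f x) (fun θ f x => c θ * P θ f x) where
  fam H hH := (h.fam _ hH).coef hc
  comm θ f hf := by
    funext x
    rw [Psm_const_mul, h.comm θ f hf]
  add θ f g hf hg := by
    rw [h.add θ f g hf hg]
    simp only [mul_add]

theorem iterate (h : Tw B A τ P' P) (n : ℕ) :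
    Tw B A τ (fun θ f => (P' θ)^[n] f) (fun θ f => (P θ)^[n] f) := by
  induction n with
  | zero => exact Tw.id
  | succ n ih =>
    simp only [Function.iterate_succ_apply']
    exact h.comp ih

theorem foldr {α : Type*} (l : List α) {F' F : α → ℝ → ((Idx r p → ℝ) → ℝ) → (Idx r p → ℝ) → ℝ}
    (h : ∀ a, Tw B A τ (F' a) (F a)) :
    Tw B A τ (fun θ f => l.foldr (fun a g => F' a θ g) f)
      (fun θ f => l.foldr (fun a g => F a θ g) f) := by
  induction l with
  | nil => exact Tw.id
  | cons a l ih => exact (h a).comp ih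

section
variable (hC : (covMat B A τ).PosDef)
include hC

theorem plus (h1 : Tw B A τ P' P) (h2 : Tw B A τ Q' Q) :
    Tw B A τ (fun θ f x => P' θ f x + Q' θ f x) (fun θ f x => P θ f x + Q θ f x) where
  fam H hH := (h1.fam _ hH).add _ _ (h2.fam _ hH)
  comm θ f hf := by
    funext x
    rw [Psm_add hC (h1.temperate hf θ) (h2.temperate hf θ), h1.comm θ f hf, h2.comm θ f hf]
  add θ f g hf hg := by
    rw [h1.add θ f g hf hg, h2.add θ f g hf hg]
    funext x
    ring

theorem minus (h1 : Tw B A τ P' P) (h2 : Tw B A τ Q' Q) :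
    Tw B A τ (fun θ f x => P' θ f x - Q' θ f x) (fun θ f x => P θ f x - Q θ f x) := by
  have h := h1.plus hC (h2.coef (c := fun _ => -1) continuous_const)
  simpa only [neg_mul, one_mul, ← sub_eq_add_neg] using h

theorem sum {α : Type*} (s : Finset α)
    {F' F : α → ℝ → ((Idx r p → ℝ) → ℝ) → (Idx r p → ℝ) → ℝ} (h : ∀ a, Tw B A τ (F' a) (F a)) :
    Tw B A τ (fun θ f x => ∑ a ∈ s, F' a θ f x) (fun θ f x => ∑ a ∈ s, F a θ f x) := by
  classical
  induction s using Finset.induction_on with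
  | empty => simpa using Tw.zero
  | insert a s ha ih =>
    simp only [Finset.sum_insert ha]
    exact (h a).plus hC ih

theorem wop {σ : ℝ → ℝ} (hσ : Continuous σ) (i : Idx r p) :
    Tw B A τ (fun θ => Wop B (σ θ) i) (fun θ => Wop B (τ + σ θ) i) where
  fam H hH := by
    refine Fam.sum (F := fun j θ x => mexp (-(σ θ • Bᵀ)) i j * pdx j (H θ) x) _ fun j _ =>
      (hH.pdx j).coef ?_
    simp only [← neg_smul]
    exact (mexp_continuous Bᵀ i j).comp hσ.neg
  comm θ f hf := Psm_Wop hC hf _ _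
  add θ f g hf hg := by
    funext x
    simp only [Wop, pdx_add hf hg, Matrix.mulVec, dotProduct, mul_add, Finset.sum_add_distrib]

theorem mop {σ : ℝ → ℝ} (hσ : Continuous σ) (i : Idx r p) :
    Tw B A τ (fun θ => Mop B A (σ θ) i) (fun θ => Mop B A (τ + σ θ) i) where
  fam H hH := by
    have h : (fun θ => Mop B A (σ θ) i (H θ)) = fun θ x =>
        (∑ k, mexp (σ θ • B) i k * (x k * H θ x))
          + ∑ l, covMat B A (σ θ) i l * Wop B (σ θ) l (H θ) x := by
      funext θ x
      rw [Mop_eq]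
      simp only [Matrix.mulVec, dotProduct, Finset.sum_mul, mul_assoc]
    rw [h]
    refine Fam.add _ _ (Fam.sum (F := fun k θ x => mexp (σ θ • B) i k * (x k * H θ x)) _ fun k _ =>
      (hH.mul_temperate (temperate_coord k)).coef ((mexp_continuous B i k).comp hσ))
      (Fam.sum (F := fun l θ x => covMat B A (σ θ) i l * Wop B (σ θ) l (H θ) x) _ fun l _ =>
        ((wop hC hσ l).fam _ hH).coef ?_)
    exact (((continuous_apply l).comp (continuous_apply i)).comp (covMat_continuous B A)).comp hσ
  comm θ f hf := Psm_Mop hC hf _ _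
  add θ f g hf hg := by
    funext x
    simp only [Mop, pdx_add hf hg, Matrix.mulVec, dotProduct, mul_add, Finset.sum_add_distrib]
    ring

theorem mshiftPow {σ : ℝ → ℝ} (hσ : Continuous σ) {c : ℝ → Idx r p → ℝ} (hc : Continuous c)
    (β : Idx r p → ℕ) :
    Tw B A τ (fun θ => MshiftPow B A (σ θ) (c θ) β) (fun θ => MshiftPow B A (τ + σ θ) (c θ) β) := by
  refine Tw.foldr (F' := fun i θ g => (MopShift B A (σ θ) (c θ i) i)^[β i] g)
    (F := fun i θ g => (MopShift B A (τ + σ θ) (c θ i) i)^[β i] g) _ fun i => ?_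
  refine Tw.iterate (P' := fun θ => MopShift B A (σ θ) (c θ i) i)
    (P := fun θ => MopShift B A (τ + σ θ) (c θ i) i) ?_ _
  exact (mop hC hσ i).minus hC (Tw.id.coef ((continuous_apply i).comp hc))

theorem tpolyOp {σ : ℝ → ℝ} (hσ : Continuous σ) (b : ℝ → (Idx r p → ℝ) → ℝ) (tb : ℝ)
    (xb : Idx r p → ℝ) (n : ℤ) :
    Tw B A τ (fun θ => TpolyOp B A b tb xb n θ (σ θ))
      (fun θ => TpolyOp B A b tb xb n θ (τ + σ θ)) := by
  have hc : Continuous fun θ : ℝ => mexp ((θ - tb) • B) *ᵥ xb :=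
    ((mexp_continuous' B).comp (continuous_id.sub continuous_const)).matrix_mulVec continuous_const
  refine Tw.sum hC _ fun k => Tw.sum hC _ fun β => ?_
  split_ifs
  · exact (mshiftPow hC hσ hc β).coef (c := fun θ => ((k.factorial * mfact β : ℕ) : ℝ)⁻¹ *
      YDx B k β b tb xb * (θ - tb) ^ k) (by fun_prop)
  · exact Tw.zero

/-- `P_{s-t} G_n(s,θ) = G_n(t,θ) P_{s-t}` for all `θ`. -/
theorem gop {t s : ℝ} (hτ : τ = s - t) (a : Idx r p → Idx r p → ℝ → (Idx r p → ℝ) → ℝ)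
    (aD : Idx r p → ℝ → (Idx r p → ℝ) → ℝ) (tb : ℝ) (xb : Idx r p → ℝ) (n : ℤ) :
    Tw B A τ (fun θ => Gop B A a aD tb xb n s θ) (fun θ => Gop B A a aD tb xb n t θ) := by
  have hσ : Continuous fun θ : ℝ => θ - s := by fun_prop
  have hθ : ∀ θ, θ - t = τ + (θ - s) := fun θ => by rw [hτ]; ring
  unfold Gop
  simp only [hθ]
  refine (Tw.coef (c := fun _ => 1 / 2) (Tw.sum hC _ fun i => Tw.sum hC _ fun j => ?_)
    continuous_const).plus hC (Tw.sum hC _ fun i => ?_)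
  · exact ((tpolyOp hC hσ _ tb xb _).comp ((wop hC hσ i).comp (wop hC hσ j))).minus hC
      ((tpolyOp hC hσ _ tb xb _).comp ((wop hC hσ i).comp (wop hC hσ j)))
  · exact ((tpolyOp hC hσ _ tb xb _).comp (wop hC hσ i)).minus hC
      ((tpolyOp hC hσ _ tb xb _).comp (wop hC hσ i))

end
end Tw
end Intertwining

/-! ### Operators on the diagonal, semigroup property, iterated integrals -/

section Duhamel

variable {r : ℕ} {p : Fin (r + 1) → ℕ}

theorem AzMat_symm {a : Idx r p → Idx r p → ℝ → (Idx r p → ℝ) → ℝ} (hsym : ∀ i j, a i j = a j i)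
    (tb : ℝ) (xb : Idx r p → ℝ) : (AzMat a tb xb)ᵀ = AzMat a tb xb := by
  ext i j
  simp only [AzMat, Matrix.transpose_apply, Matrix.of_apply, hsym i j, and_comm]

theorem AzMat_quad (a : Idx r p → Idx r p → ℝ → (Idx r p → ℝ) → ℝ)
    (tb : ℝ) (xb η : Idx r p → ℝ) :
    η ⬝ᵥ (AzMat a tb xb *ᵥ η)
      = ∑ i ∈ G0set r p, ∑ j ∈ G0set r p, a i j tb xb * η i * η j := by
  simp only [dotProduct, Matrix.mulVec, G0set, Finset.sum_filter, AzMat, Matrix.of_apply,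
    Finset.mul_sum]
  refine Finset.sum_congr rfl fun i _ => ?_
  split_ifs with hi
  · refine Finset.sum_congr rfl fun j _ => ?_
    by_cases hj : (j.1 : ℕ) = 0
    · simp only [hi, hj, and_self, if_true]
      ring
    · simp [hj]
  · exact Finset.sum_eq_zero fun j _ => by simp [hi]

/-- Ellipticity of the first block, on arbitrary vectors: only the first group of coordinates
enters, so the vector may be truncated to it. -/
theorem AzMat_elliptic {a : Idx r p → Idx r p → ℝ → (Idx r p → ℝ) → ℝ} {M μ : ℝ}
    (hell : ∀ (t : ℝ) (x ξ : Idx r p → ℝ), suppG0 ξ → ξ ≠ 0 →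
      μ * M * (∑ i, ξ i ^ 2) < ∑ i ∈ G0set r p, ∑ j ∈ G0set r p, a i j t x * ξ i * ξ j ∧
      ∑ i ∈ G0set r p, ∑ j ∈ G0set r p, a i j t x * ξ i * ξ j < M * ∑ i, ξ i ^ 2)
    (tb : ℝ) (xb η : Idx r p → ℝ) :
    μ * M * ∑ i ∈ G0set r p, η i ^ 2 ≤ η ⬝ᵥ (AzMat a tb xb *ᵥ η) := by
  set ξ : Idx r p → ℝ := fun i => if (i.1 : ℕ) = 0 then η i else 0 with hξ
  have hG : ∀ i ∈ G0set r p, η i = ξ i := fun i hi => by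
    rw [G0set, Finset.mem_filter] at hi
    simp only [hξ, hi.2, if_true]
  have h1 : ∑ i ∈ G0set r p, η i ^ 2 = ∑ i, ξ i ^ 2 := by
    rw [G0set, Finset.sum_filter]
    refine Finset.sum_congr rfl fun i _ => ?_
    simp only [hξ]
    split_ifs <;> simp
  have h2 : ∑ i ∈ G0set r p, ∑ j ∈ G0set r p, a i j tb xb * η i * η j
      = ∑ i ∈ G0set r p, ∑ j ∈ G0set r p, a i j tb xb * ξ i * ξ j :=
    Finset.sum_congr rfl fun i hi => Finset.sum_congr rfl fun j hj => by rw [hG i hi, hG j hj]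
  rw [AzMat_quad, h1, h2]
  by_cases h0 : ξ = 0
  · simp [h0]
  · exact (hell tb xb ξ (fun i hi => if_neg hi) h0).1.le

theorem Wop_self (B : Matrix (Idx r p) (Idx r p) ℝ) (i : Idx r p) (f : (Idx r p → ℝ) → ℝ) :
    Wop B 0 i f = pdx i f := by
  funext x
  simp [Wop, mexp_zero]

theorem Mop_self (B A : Matrix (Idx r p) (Idx r p) ℝ) (i : Idx r p) (f : (Idx r p → ℝ) → ℝ) :
    Mop B A 0 i f = fun x => x i * f x := by
  funext x
  simp [Mop_eq, mexp_zero, covMat_zero]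

/-- At time lag zero the operators `M_i` are multiplications by `x_i`. -/
theorem MshiftPow_self (B A : Matrix (Idx r p) (Idx r p) ℝ) (c : Idx r p → ℝ) (β : Idx r p → ℕ)
    (f : (Idx r p → ℝ) → ℝ) (x : Idx r p → ℝ) :
    MshiftPow B A 0 c β f x = (∏ j, (x j - c j) ^ β j) * f x := by
  have h1 : ∀ (i : Idx r p) (n : ℕ) (g : (Idx r p → ℝ) → ℝ),
      (MopShift B A 0 (c i) i)^[n] g = fun y => (y i - c i) ^ n * g y := by
    intro i n g
    induction n with
    | zero => simp
    | succ n ih =>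
      rw [Function.iterate_succ_apply', ih]
      funext y
      simp only [MopShift, Mop_self]
      ring
  have h2 : ∀ l : List (Idx r p), l.foldr (fun i g => (MopShift B A 0 (c i) i)^[β i] g) f
      = fun y => (l.map fun j => (y j - c j) ^ β j).prod * f y := by
    intro l
    induction l with
    | nil => simp
    | cons i l ih =>
      rw [List.foldr_cons, ih, h1]
      funext y
      simp only [List.map_cons, List.prod_cons, mul_assoc]
  simp only [MshiftPow, h2, Finset.prod_map_toList]

theorem TpolyOp_self (B A : Matrix (Idx r p) (Idx r p) ℝ) (b : ℝ → (Idx r p → ℝ) → ℝ)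
    (tb : ℝ) (xb : Idx r p → ℝ) (n : ℤ) (s : ℝ) (f : (Idx r p → ℝ) → ℝ) (x : Idx r p → ℝ) :
    TpolyOp B A b tb xb n s 0 f x = Tpoly B b tb xb n s x * f x := by
  simp only [TpolyOp, Tpoly, Finset.sum_mul]
  refine Finset.sum_congr rfl fun k _ => Finset.sum_congr rfl fun β _ => ?_
  split_ifs
  · rw [MshiftPow_self]
    ring
  · rw [zero_mul]

/-- On the diagonal `t = s` the operators `M_i` and `W_i` reduce to multiplication by `x_i` and
to `∂_i`, so that `G_n(s,s) = K_n - K_{n-1}`. -/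
theorem Kdiff_eq_Gop (B A : Matrix (Idx r p) (Idx r p) ℝ)
    (a : Idx r p → Idx r p → ℝ → (Idx r p → ℝ) → ℝ) (aD : Idx r p → ℝ → (Idx r p → ℝ) → ℝ)
    (tb : ℝ) (xb : Idx r p → ℝ) (n : ℤ) (g : (Idx r p → ℝ) → ℝ) (s : ℝ) (ξ : Idx r p → ℝ) :
    Kdiff B a aD tb xb n g s ξ = Gop B A a aD tb xb n s s g ξ := by
  simp only [Kdiff, Gop, sub_self, TpolyOp_self, Wop_self, sub_mul]

/-- Semigroup property of the Gaussian transition operators on bounded functions. -/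
theorem Psm_semigroup {B A : Matrix (Idx r p) (Idx r p) ℝ} {σ τ : ℝ}
    (hσ : (covMat B A σ).PosDef) (hτ : (covMat B A τ).PosDef) (hστ : (covMat B A (σ + τ)).PosDef)
    {φ : (Idx r p → ℝ) → ℝ} (hφc : Continuous φ) {D : ℝ} (hφb : ∀ x, |φ x| ≤ D)
    (x : Idx r p → ℝ) : Psm B A σ (Psm B A τ φ) x = Psm B A (σ + τ) φ x := by
  set C₁ := covMat B A σ
  set C₂ := covMat B A τ
  set E := mexp (τ • B)
  set v := mexp (σ • B) *ᵥ x
  have hint : ∀ {C : Matrix (Idx r p) (Idx r p) ℝ}, C.PosDef → Integrable (gdens C) := by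
    intro C hC
    obtain ⟨g, hg⟩ := gdens_schwartz hC
    exact g.integrable.congr (Filter.Eventually.of_forall hg)
  have hcts : ∀ {C : Matrix (Idx r p) (Idx r p) ℝ}, C.PosDef → Continuous (gdens C) := fun hC =>
    continuous_iff_continuousAt.2 fun w => (hasFDerivAt_gdens hC w).continuousAt
  have hnn : ∀ (C : Matrix (Idx r p) (Idx r p) ℝ) w, 0 ≤ gdens C w := fun C w => by
    unfold gdens; positivity
  have hcF : Continuous fun q : (Idx r p → ℝ) × (Idx r p → ℝ) =>
      gdens C₁ (q.1 - v) * gdens C₂ (q.2 - E *ᵥ q.1) :=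
    ((hcts hσ).comp (by fun_prop)).mul ((hcts hτ).comp
      (continuous_snd.sub (continuous_const.matrix_mulVec continuous_fst)))
  have hF : Integrable (fun q : (Idx r p → ℝ) × (Idx r p → ℝ) =>
      gdens C₁ (q.1 - v) * gdens C₂ (q.2 - E *ᵥ q.1)) (volume.prod volume) := by
    rw [integrable_prod_iff hcF.aestronglyMeasurable]
    have hy : ∀ w : Idx r p → ℝ, Integrable fun y => gdens C₁ (w - v) * gdens C₂ (y - E *ᵥ w) :=
      fun w => ((hint hτ).comp_sub_right (E *ᵥ w)).const_mul (gdens C₁ (w - v))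
    refine ⟨Filter.Eventually.of_forall hy, ?_⟩
    have : (fun w => ∫ y, ‖gdens C₁ (w - v) * gdens C₂ (y - E *ᵥ w)‖)
        = fun w => gdens C₁ (w - v) * ∫ y, gdens C₂ y := by
      funext w
      simp only [Real.norm_of_nonneg (mul_nonneg (hnn _ _) (hnn _ _))]
      rw [integral_const_mul, integral_sub_right_eq_self]
    simp only [this]
    exact ((hint hσ).comp_sub_right v).mul_const _
  have hF' : Integrable (Function.uncurry fun w y =>
      gdens C₁ (w - v) * gdens C₂ (y - E *ᵥ w) * φ y) (volume.prod volume) :=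
    hF.mul_bdd (c := D) (hφc.comp continuous_snd).aestronglyMeasurable
      (Filter.Eventually.of_forall fun q => by simpa using hφb q.2)
  have e1 : Psm B A σ (Psm B A τ φ) x
      = ∫ w, ∫ y, gdens C₁ (w - v) * gdens C₂ (y - E *ᵥ w) * φ y := by
    simp only [mul_assoc, integral_const_mul]
    rfl
  rw [e1, integral_integral_swap hF']
  change _ = ∫ y, gdens (covMat B A (σ + τ)) (y - mexp ((σ + τ) • B) *ᵥ x) * φ y
  refine integral_congr_ae (Filter.Eventually.of_forall fun y => ?_)
  simp only
  rw [integral_mul_const]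
  congr 1
  have e2 : y - mexp ((σ + τ) • B) *ᵥ x = y - E *ᵥ v := by
    rw [add_comm σ τ, mexp_add, ← Matrix.mulVec_mulVec]
  rw [e2, ← gdens_conv hστ hσ hτ (mexp_det_ne B τ) (covMat_add B A σ τ),
    ← integral_sub_right_eq_self (fun w => gdens C₁ w * gdens C₂ (y - E *ᵥ v - E *ᵥ w)) v]
  refine integral_congr_ae (Filter.Eventually.of_forall fun w => ?_)
  simp only
  congr 2
  rw [Matrix.mulVec_sub]
  abel

variable {B A : Matrix (Idx r p) (Idx r p) ℝ}
  {a : Idx r p → Idx r p → ℝ → (Idx r p → ℝ) → ℝ} {aD : Idx r p → ℝ → (Idx r p → ℝ) → ℝ}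
  {tb : ℝ} {xb : Idx r p → ℝ} {t s T : ℝ} {u : (Idx r p → ℝ) → ℝ}

/-- The iterated integrals depend on their lower limit through a family `Fam`. The transition
operator plays no role here: `Tw.gop`, over an arbitrary positive span, is used only for the
stability of `Fam` under `G_m(t,θ)`. -/
theorem Fam.lrec (hC : ∀ τ, 0 < τ → (covMat B A τ).PosDef) (hu : u.HasTemperateGrowth)
    (l : List ℕ) : Fam fun lo => Lrec B A a aD tb xb t T u l lo := by
  induction l with
  | nil => exact Fam.const hu
  | cons m ms ih =>
    exact Fam.integral ((Tw.gop (τ := 1) (hC 1 one_pos) (t := t - 1) (s := t) (by ring)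
      a aD tb xb m).fam _ ih) T

/-- The transition operator over `s - t` carries the iterated integrals of the `G_i(s,·)` to those
of the `G_i(t,·)`. -/
theorem Psm_lrec (hC : ∀ τ, 0 < τ → (covMat B A τ).PosDef) (hu : u.HasTemperateGrowth)
    (hts : t < s) (l : List ℕ) (lo : ℝ) :
    Psm B A (s - t) (Lrec B A a aD tb xb s T u l lo)
      = Lrec B A a aD tb xb t T (Psm B A (s - t) u) l lo := by
  have hc := hC (s - t) (sub_pos.2 hts)
  induction l generalizing lo with
  | nil => rfl
  | cons m ms ih =>
    have hg := Tw.gop hc (t := t) (s := s) rfl a aD tb xb m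
    have hf := Fam.lrec (a := a) (aD := aD) (tb := tb) (xb := xb) (t := s) (T := T) hC hu ms
    funext x
    simp only [Lrec]
    rw [((hg.fam _ hf).Psm_integral hc T x).2 lo]
    refine intervalIntegral.integral_congr fun θ _ => ?_
    rw [hg.comm θ _ (hf.temperate θ), ih]

end Duhamel

/-! ### Compositions and the Duhamel recursion -/

section Compositions

/-- The finite set of lists of positive integers with sum `n`. -/
def comps (n : ℕ) : Finset (List ℕ) := (Finset.univ : Finset (Composition n)).image (·.blocks)

theorem mem_comps {n : ℕ} {l : List ℕ} : l ∈ comps n ↔ (∀ i ∈ l, 1 ≤ i) ∧ l.sum = n := by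
  simp only [comps, Finset.mem_image, Finset.mem_univ, true_and]
  constructor
  · rintro ⟨c, rfl⟩
    exact ⟨fun i hi => c.one_le_blocks hi, c.blocks_sum⟩
  · rintro ⟨h1, h2⟩
    exact ⟨⟨l, fun hi => h1 _ hi, h2⟩, rfl⟩

theorem comps_zero : comps 0 = {[]} := by
  ext l
  rw [mem_comps, Finset.mem_singleton]
  constructor
  · rintro ⟨h1, h2⟩
    rcases l with _ | ⟨m, l⟩
    · rfl
    · have := h1 m (List.mem_cons_self ..)
      rw [List.sum_cons] at h2
      omega
  · rintro rfl
    simp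

/-- Splitting a composition of `n + 1` at its first block. -/
theorem sum_comps_succ (n : ℕ) (F : List ℕ → ℝ) :
    ∑ l ∈ comps (n + 1), F l
      = ∑ h ∈ Finset.range (n + 1), ∑ l ∈ comps (n - h), F ((h + 1) :: l) := by
  rw [Finset.sum_sigma']
  symm
  refine Finset.sum_bij (fun q _ => (q.1 + 1) :: q.2) ?_ ?_ ?_ ?_
  · rintro ⟨h, l⟩ hq
    simp only [Finset.mem_sigma, Finset.mem_range, mem_comps] at hq
    rw [mem_comps]
    refine ⟨fun i hi => ?_, ?_⟩
    · rcases List.mem_cons.1 hi with rfl | hi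
      · omega
      · exact hq.2.1 i hi
    · have h1 := hq.1
      rw [List.sum_cons, hq.2.2]
      change h + 1 + (n - h) = n + 1
      omega
  · rintro ⟨h, l⟩ _ ⟨h', l'⟩ _ heq
    simp only [List.cons.injEq, add_left_inj] at heq
    obtain ⟨rfl, rfl⟩ := heq
    rfl
  · intro l hl
    rw [mem_comps] at hl
    rcases l with _ | ⟨m, l⟩
    · simp at hl
    · have h1 := hl.1 m (List.mem_cons_self ..)
      have h2 := hl.2
      rw [List.sum_cons] at h2
      refine ⟨⟨m - 1, l⟩, ?_, ?_⟩
      · simp only [Finset.mem_sigma, Finset.mem_range, mem_comps]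
        exact ⟨by omega, fun i hi => hl.1 i (List.mem_cons_of_mem _ hi), by omega⟩
      · simp only [List.cons.injEq, and_true]
        omega
  · rintro ⟨h, l⟩ _
    rfl

/-- Indexing the compositions of `n ≥ 1` by their length and their entries. -/
theorem sum_comps_eq_sum_ofFn {n : ℕ} (hn : 1 ≤ n) (F : List ℕ → ℝ) :
    ∑ l ∈ comps n, F l = ∑ h ∈ Finset.Icc 1 n,
      ∑ iv ∈ (Fintype.piFinset fun _ : Fin h => Finset.Icc 1 n).filter (fun iv => ∑ j, iv j = n),
        F (List.ofFn iv) := by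
  rw [Finset.sum_sigma']
  symm
  refine Finset.sum_bij (fun q _ => List.ofFn q.2) ?_ ?_ ?_ ?_
  · rintro ⟨h, iv⟩ hq
    simp only [Finset.mem_sigma, Finset.mem_filter, Fintype.mem_piFinset, Finset.mem_Icc] at hq
    rw [mem_comps, List.sum_ofFn]
    refine ⟨fun i hi => ?_, hq.2.2⟩
    obtain ⟨j, rfl⟩ := (List.mem_ofFn' _ _).1 hi
    exact (hq.2.1 j).1
  · rintro ⟨h, iv⟩ _ ⟨h', iv'⟩ _ heq
    exact List.ofFn_inj'.1 heq
  · intro l hl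
    rw [mem_comps] at hl
    have hlen : l.length ≤ l.sum := List.length_le_sum_of_one_le _ hl.1
    refine ⟨⟨l.length, fun i => l[i]⟩, ?_, List.ofFn_getElem⟩
    simp only [Finset.mem_sigma, Finset.mem_filter, Fintype.mem_piFinset, Finset.mem_Icc]
    refine ⟨⟨?_, by omega⟩, fun i => ⟨hl.1 _ (List.getElem_mem _), ?_⟩, ?_⟩
    · rcases l with _ | ⟨m, l⟩
      · simp only [List.sum_nil] at hl
        omega
      · simp
    · rw [← hl.2]
      exact List.single_le_sum (fun _ _ => Nat.zero_le _) _ (List.getElem_mem _)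
    · rw [← hl.2, ← List.sum_ofFn]
      exact congrArg List.sum List.ofFn_getElem
  · rintro ⟨h, iv⟩ _
    rfl

end Compositions

section Main

variable {r : ℕ} {p : Fin (r + 1) → ℕ} {B A : Matrix (Idx r p) (Idx r p) ℝ} {τ : ℝ}

/-- An empty sum is allowed: additivity forces the operator to annihilate the zero function. -/
theorem Tw.map_sum {O' O : ℝ → ((Idx r p → ℝ) → ℝ) → (Idx r p → ℝ) → ℝ} (hO : Tw B A τ O' O)
    (θ : ℝ) {α : Type*} (s : Finset α)
    {F : α → (Idx r p → ℝ) → ℝ} (hF : ∀ b, (F b).HasTemperateGrowth) :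
    O' θ (fun x => ∑ b ∈ s, F b x) = fun x => ∑ b ∈ s, O' θ (F b) x := by
  classical
  induction s using Finset.induction_on with
  | empty =>
    funext x
    have h := congrFun (hO.add θ (fun _ => 0) (fun _ => 0) (Function.HasTemperateGrowth.const 0)
      (Function.HasTemperateGrowth.const 0)) x
    simp only [add_zero] at h
    simpa using h
  | insert b s hb ih =>
    simp only [Finset.sum_insert hb]
    rw [hO.add θ _ _ (hF b) (Function.HasTemperateGrowth.sum fun c _ => hF c), ih]

variable {a : Idx r p → Idx r p → ℝ → (Idx r p → ℝ) → ℝ} {aD : Idx r p → ℝ → (Idx r p → ℝ) → ℝ}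
  {tb : ℝ} {xb : Idx r p → ℝ} {T : ℝ} {φ : (Idx r p → ℝ) → ℝ}

/-- The representation of `u_n` as a sum over compositions of `n`, by strong induction on `n`. In
the Duhamel formula the representation of `u_{n-h}(s,·)` is inserted, `P_{s-t}` is moved through
all operators and turns `u_0(s,·)` into `u_0(t,·)`, and the block `h` is prefixed to the
composition of `n - h`. -/
theorem useq_eq_sum_lrec (hC : ∀ τ, 0 < τ → (covMat B (AzMat a tb xb) τ).PosDef)
    (hφc : Continuous φ) (hφb : ∃ D, ∀ x, |φ x| ≤ D) (n : ℕ) :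
    ∀ t, t < T → useq B a aD tb xb T φ n t = fun x => ∑ l ∈ comps n,
      Lrec B (AzMat a tb xb) a aD tb xb t T (u0fn B (AzMat a tb xb) T φ t) l t x := by
  obtain ⟨D, hD⟩ := hφb
  have hu : ∀ t, t < T → (u0fn B (AzMat a tb xb) T φ t).HasTemperateGrowth := fun t ht =>
    gsm_temperate (hC (T - t) (sub_pos.2 ht)) _ hφc (D := D) (k := 0) (by simpa using hD)
  induction n using Nat.strong_induction_on with
  | _ n IH =>
  intro t ht
  rcases n with _ | n
  · funext x
    simp only [comps_zero, Finset.sum_singleton, Lrec]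
    rw [useq]
  funext x
  rw [useq, sum_comps_succ]
  have hcont : ∀ (h : ℕ) (l : List ℕ), Continuous fun s =>
      Gop B (AzMat a tb xb) a aD tb xb ((h + 1 : ℕ) : ℤ) t s
        (Lrec B (AzMat a tb xb) a aD tb xb t T (u0fn B (AzMat a tb xb) T φ t) l s) x := fun h l =>
    ((Tw.gop (τ := 1) (hC 1 one_pos) (t := t - 1) (s := t) (by ring) a aD tb xb
      ((h + 1 : ℕ) : ℤ)).fam _ (Fam.lrec hC (hu t ht) l)).continuous x
  have key : ∀ s ∈ Set.Ioo t T,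
      (∫ ξ, gauss B (AzMat a tb xb) t x s ξ * ∑ h ∈ Finset.range (n + 1),
        Kdiff B a aD tb xb ((h : ℤ) + 1) (useq B a aD tb xb T φ (n - h) s) s ξ)
      = ∑ h ∈ Finset.range (n + 1), ∑ l ∈ comps (n - h),
        Gop B (AzMat a tb xb) a aD tb xb ((h + 1 : ℕ) : ℤ) t s
          (Lrec B (AzMat a tb xb) a aD tb xb t T (u0fn B (AzMat a tb xb) T φ t) l s) x := by
    intro s hs
    have hc := hC (s - t) (sub_pos.2 hs.1)
    have hL : ∀ l, (Lrec B (AzMat a tb xb) a aD tb xb s T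
        (u0fn B (AzMat a tb xb) T φ s) l s).HasTemperateGrowth := fun l =>
      (Fam.lrec hC (hu s hs.2) l).temperate s
    have hG : ∀ h : ℕ, Tw B (AzMat a tb xb) (s - t)
        (fun θ => Gop B (AzMat a tb xb) a aD tb xb ((h + 1 : ℕ) : ℤ) s θ)
        (fun θ => Gop B (AzMat a tb xb) a aD tb xb ((h + 1 : ℕ) : ℤ) t θ) := fun h =>
      Tw.gop hc rfl a aD tb xb _
    have e1 : ∀ ξ, ∑ h ∈ Finset.range (n + 1),
        Kdiff B a aD tb xb ((h : ℤ) + 1) (useq B a aD tb xb T φ (n - h) s) s ξ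
        = ∑ h ∈ Finset.range (n + 1), ∑ l ∈ comps (n - h),
          Gop B (AzMat a tb xb) a aD tb xb ((h + 1 : ℕ) : ℤ) s s
            (Lrec B (AzMat a tb xb) a aD tb xb s T (u0fn B (AzMat a tb xb) T φ s) l s) ξ := by
      intro ξ
      refine Finset.sum_congr rfl fun h _ => ?_
      rw [Kdiff_eq_Gop B (AzMat a tb xb), IH (n - h) (by omega) s hs.2]
      exact congrFun ((hG h).map_sum s (comps (n - h)) hL) ξ
    simp only [e1]
    rw [integral_gauss_eq_Psm,
      Psm_sum hc _ fun h _ => Function.HasTemperateGrowth.sum fun l _ => (hG h).temperate (hL l) s]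
    refine Finset.sum_congr rfl fun h _ => ?_
    rw [Psm_sum hc _ fun l _ => (hG h).temperate (hL l) s]
    refine Finset.sum_congr rfl fun l _ => ?_
    have e2 : Psm B (AzMat a tb xb) (s - t) (u0fn B (AzMat a tb xb) T φ s)
        = u0fn B (AzMat a tb xb) T φ t := by
      funext y
      have h1 := hC (T - s) (sub_pos.2 hs.2)
      have h2 : s - t + (T - s) = T - t := by ring
      have h3 := Psm_semigroup hc h1 (h2 ▸ hC (T - t) (sub_pos.2 ht)) hφc hD y
      rw [h2] at h3
      exact h3
    rw [(hG h).comm s _ (hL l), Psm_lrec hC (hu s hs.2) hs.1, e2]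
  have hswap : (∫ s in t..T, ∑ h ∈ Finset.range (n + 1), ∑ l ∈ comps (n - h),
        Gop B (AzMat a tb xb) a aD tb xb ((h + 1 : ℕ) : ℤ) t s
          (Lrec B (AzMat a tb xb) a aD tb xb t T (u0fn B (AzMat a tb xb) T φ t) l s) x)
      = ∑ h ∈ Finset.range (n + 1), ∑ l ∈ comps (n - h), ∫ s in t..T,
        Gop B (AzMat a tb xb) a aD tb xb ((h + 1 : ℕ) : ℤ) t s
          (Lrec B (AzMat a tb xb) a aD tb xb t T (u0fn B (AzMat a tb xb) T φ t) l s) x := by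
    rw [intervalIntegral.integral_finsetSum fun h _ =>
      (continuous_finsetSum _ fun l _ => hcont h l).intervalIntegrable _ _]
    exact Finset.sum_congr rfl fun h _ => intervalIntegral.integral_finsetSum fun l _ =>
      (hcont h l).intervalIntegrable _ _
  refine Eq.trans (intervalIntegral.integral_congr_ae ?_) hswap
  -- The identity between the integrands may fail at the endpoint `s = T`, a null set.
  filter_upwards [compl_mem_ae_iff.2 (measure_singleton T)] with s hsT hs
  rw [Set.uIoc_of_le ht.le] at hs
  exact key s ⟨hs.1, lt_of_le_of_ne hs.2 hsT⟩

end Main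

/-! ### The representation -/

/-- The terms of the Duhamel recursion for the nested Cauchy problems admit
the representation `u_n(t,x) = L_n(t,T,x) u_0(t,x)` for every `1 ≤ n ≤ N` and
`(t,x) ∈ [0,T) × ℝ^d`. -/
theorem useq_eq_Lop_u0 {r : ℕ} {p : Fin (r + 1) → ℕ}
    (B : Matrix (Idx r p) (Idx r p) ℝ) (hB : IsKolB B)
    (M μ : ℝ) (hM : 0 < M) (hμ0 : 0 < μ) (hμ1 : μ < 1)
    (a : Idx r p → Idx r p → ℝ → (Idx r p → ℝ) → ℝ)
    (aD : Idx r p → ℝ → (Idx r p → ℝ) → ℝ)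
    (hsym : ∀ i j, a i j = a j i)
    (hsmooth : ∀ i j, ContDiff ℝ (⊤ : ℕ∞) (Function.uncurry (a i j)))
    (hsmoothD : ∀ i, ContDiff ℝ (⊤ : ℕ∞) (Function.uncurry (aD i)))
    (hbdd : ∀ i j (m : ℕ), ∃ C, ∀ z : ℝ × (Idx r p → ℝ),
      ‖iteratedFDeriv ℝ m (Function.uncurry (a i j)) z‖ ≤ C)
    (hbddD : ∀ i (m : ℕ), ∃ C, ∀ z : ℝ × (Idx r p → ℝ),
      ‖iteratedFDeriv ℝ m (Function.uncurry (aD i)) z‖ ≤ C)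
    (hell : ∀ (t : ℝ) (x ξ : Idx r p → ℝ), suppG0 ξ → ξ ≠ 0 →
      μ * M * (∑ i, ξ i ^ 2) < ∑ i ∈ G0set r p, ∑ j ∈ G0set r p, a i j t x * ξ i * ξ j ∧
      ∑ i ∈ G0set r p, ∑ j ∈ G0set r p, a i j t x * ξ i * ξ j < M * ∑ i, ξ i ^ 2)
    (φ : (Idx r p → ℝ) → ℝ) (hφc : Continuous φ) (hφb : ∃ C, ∀ x, |φ x| ≤ C)
    (T : ℝ) (hT : 0 < T) (tb : ℝ) (xb : Idx r p → ℝ)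
    (N n : ℕ) (hn1 : 1 ≤ n) (hnN : n ≤ N)
    (t : ℝ) (ht0 : 0 ≤ t) (htT : t < T) (x : Idx r p → ℝ) :
    useq B a aD tb xb T φ n t x
      = Lop B (AzMat a tb xb) a aD tb xb n t T (fun x' => useq B a aD tb xb T φ 0 t x') x := by
  have hC : ∀ τ, 0 < τ → (covMat B (AzMat a tb xb) τ).PosDef := fun τ hτ =>
    covMat_posDef hB (AzMat_symm hsym tb xb) (mul_pos hμ0 hM) (AzMat_elliptic hell tb xb) hτ
  have h0 : (fun x' => useq B a aD tb xb T φ 0 t x') = u0fn B (AzMat a tb xb) T φ t := by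
    funext x'
    rw [useq]
  rw [h0, useq_eq_sum_lrec hC hφc hφb n t htT]
  exact sum_comps_eq_sum_ofFn hn1 _
end
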